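/- arXiv:1603.00354 — 2 statements merged into one kernel-verified Lean document; each statement's English description precedes it below -/
import Mathlib

section
/- Let p > 1 and let q ≤ 0 be continuous and single-barrier on [0,1]. If λ_n / λ_m = n^p / m^p for two different indices n > m with λ_n > λ_m ≥ -2 min{q(0), q(1)}, then q ≡ 0 on (0,1). -/
/-- λ is a Dirichlet eigenvalue of -((y')^{(p-1)})' = (p-1)(λ - q) y^{(p-1)} on [a,b]. -/
def IsDirichletEigenvalue (p : ℝ) (q : ℝ → ℝ) (a b lam : ℝ) : Prop :=
  ∃ y yd : ℝ → ℝ,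
    (∃ x ∈ Set.Icc a b, y x ≠ 0) ∧
    (∀ x ∈ Set.Icc a b, HasDerivAt y (yd x) x) ∧
    (∀ x ∈ Set.Icc a b, HasDerivAt (fun t => |yd t| ^ (p - 2) * yd t)
      (-(p - 1) * (lam - q x) * (|y x| ^ (p - 2) * y x)) x) ∧
    y a = 0 ∧ y b = 0

namespace PLaplace

open Set Filter Topology MeasureTheory

/-- The odd power `t ↦ |t| ^ (p - 2) * t`. -/
noncomputable def spow (p t : ℝ) : ℝ := |t| ^ (p - 2) * t

lemma spow_zero (p : ℝ) : spow p 0 = 0 := by simp [spow]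

lemma spow_neg (p t : ℝ) : spow p (-t) = -spow p t := by simp [spow]

lemma spow_mul (p a b : ℝ) : spow p (a * b) = spow p a * spow p b := by
  simp only [spow, abs_mul, Real.mul_rpow (abs_nonneg a) (abs_nonneg b)]; ring

lemma spow_of_pos {p t : ℝ} (ht : 0 < t) : spow p t = t ^ (p - 1) := by
  rw [spow, abs_of_pos ht, show p - 1 = (p - 2) + 1 by ring, Real.rpow_add_one ht.ne']

lemma spow_mul_self {p : ℝ} (hp : p ≠ 0) (t : ℝ) : spow p t * t = |t| ^ p := by
  rcases eq_or_ne t 0 with rfl | ht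
  · simp [spow, Real.zero_rpow hp]
  · have h : 0 < |t| := abs_pos.2 ht
    rw [spow, mul_assoc, ← abs_mul_abs_self t, ← mul_assoc, ← Real.rpow_add_one h.ne',
      ← Real.rpow_add_one h.ne']
    ring_nf

lemma abs_spow {p : ℝ} (hp : 1 < p) (t : ℝ) : |spow p t| = |t| ^ (p - 1) := by
  rcases eq_or_ne t 0 with rfl | ht
  · simp [spow, Real.zero_rpow (sub_pos.2 hp).ne']
  · have h : 0 < |t| := abs_pos.2 ht
    rw [spow, abs_mul, abs_of_nonneg (Real.rpow_nonneg h.le _), ← Real.rpow_add_one h.ne']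
    ring_nf

lemma spow_spow {p r : ℝ} (hp : 1 < p) (h : (p - 1) * (r - 1) = 1) (t : ℝ) :
    spow r (spow p t) = t := by
  rcases eq_or_ne t 0 with rfl | ht
  · simp [spow]
  · have h0 : 0 < |t| := abs_pos.2 ht
    rw [spow, abs_spow hp, spow, ← Real.rpow_mul h0.le, ← mul_assoc, ← Real.rpow_add h0,
      show (p - 1) * (r - 2) + (p - 2) = 0 by linarith, Real.rpow_zero, one_mul]

lemma spow_ne_zero {p t : ℝ} (ht : t ≠ 0) : spow p t ≠ 0 :=
  mul_ne_zero (Real.rpow_pos_of_pos (abs_pos.2 ht) _).ne' ht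

lemma hasDerivAt_abs_rpow' {p : ℝ} (hp : 1 < p) (t : ℝ) :
    HasDerivAt (fun x : ℝ => |x| ^ p) (p * spow p t) t := by
  simpa [spow, mul_assoc] using hasDerivAt_abs_rpow t hp

lemma continuous_spow {p : ℝ} (hp : 1 < p) : Continuous (spow p) := by
  have h := (contDiff_norm_rpow (E := ℝ) hp).continuous_deriv le_rfl
  have h2 : deriv (fun x : ℝ => ‖x‖ ^ p) = fun t => p * spow p t := by
    funext t; exact (hasDerivAt_abs_rpow' hp t).deriv
  rw [h2] at h
  have h3 := h.const_mul (p⁻¹)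
  have hp0 : p ≠ 0 := by linarith
  simpa [← mul_assoc, inv_mul_cancel₀ hp0] using! h3

lemma hasDerivAt_spow {t : ℝ} (p : ℝ) (ht : t ≠ 0) :
    HasDerivAt (spow p) ((p - 1) * |t| ^ (p - 2)) t := by
  rcases lt_or_gt_of_ne ht with h | h
  · have h1 : HasDerivAt (fun x : ℝ => -((-x) ^ (p - 1))) ((p - 1) * |t| ^ (p - 2)) t := by
      have := ((hasDerivAt_neg t).rpow_const (p := p - 1) (Or.inl (by linarith : -t ≠ 0))).neg
      refine HasDerivAt.congr_deriv this ?_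
      rw [abs_of_neg h]; ring_nf
    refine h1.congr_of_eventuallyEq ?_
    filter_upwards [gt_mem_nhds h] with x hx
    rw [← spow_of_pos (by linarith : 0 < -x), spow_neg, neg_neg]
  · have h1 : HasDerivAt (fun x : ℝ => x ^ (p - 1)) ((p - 1) * |t| ^ (p - 2)) t := by
      have := (hasDerivAt_id t).rpow_const (p := p - 1) (Or.inl h.ne')
      refine HasDerivAt.congr_deriv this ?_
      rw [abs_of_pos h]; simp only [id]; ring_nf
    refine h1.congr_of_eventuallyEq ?_
    filter_upwards [lt_mem_nhds h] with x hx
    rw [spow_of_pos hx]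

/-- A generalized sine `S` for the exponent `p`, with derivative `C` and half-period `P`. -/
structure PTrig (p : ℝ) where
  S : ℝ → ℝ
  C : ℝ → ℝ
  P : ℝ
  P_pos : 0 < P
  deriv_S : ∀ x, HasDerivAt S (C x) x
  deriv_C : ∀ x, HasDerivAt (fun t => spow p (C t)) (-(p - 1) * spow p (S x)) x
  cont_C : Continuous C
  pyth : ∀ x, |S x| ^ p + |C x| ^ p = 1
  S_add : ∀ x, S (x + P) = -S x
  C_add : ∀ x, C (x + P) = -C x
  S_neg : ∀ x, S (-x) = -S x
  C_neg : ∀ x, C (-x) = C x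
  S_pos : ∀ x, 0 < x → x < P → 0 < S x
  C_pos : ∀ x, 0 ≤ x → x < P / 2 → 0 < C x
  C_half : C (P / 2) = 0

/-- The inverse of a primitive of a positive, even, `π`-periodic continuous function. -/
lemma exists_angle_reparametrization {m : ℝ → ℝ} (hm : Continuous m) (hpos : ∀ x, 0 < m x)
    (hper : ∀ x, m (x + Real.pi) = m x) (heven : ∀ x, m (-x) = m x) :
    ∃ (α : ℝ → ℝ) (P : ℝ), 0 < P ∧ (∀ x, HasDerivAt α (m (α x))⁻¹ x) ∧ α 0 = 0 ∧
      (∀ x, α (x + P) = α x + Real.pi) ∧ (∀ x, α (-x) = -α x) ∧ α (P / 2) = Real.pi / 2 ∧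
      StrictMono α := by
  set h : ℝ → ℝ := fun a => ∫ t in (0 : ℝ)..a, m t with hh
  have hI : ∀ a b, IntervalIntegrable m volume a b := fun a b => hm.intervalIntegrable a b
  have hd : ∀ a, HasDerivAt h (m a) a := fun a => hm.integral_hasStrictDerivAt 0 a |>.hasDerivAt
  have hcont : Continuous h := continuous_iff_continuousAt.2 fun a => (hd a).continuousAt
  have hmono : StrictMono h :=
    strictMono_of_deriv_pos fun a => by rw [(hd a).deriv]; exact hpos a
  have h0 : h 0 = 0 := by simp [hh]
  have hneg : ∀ a, h (-a) = -h a := by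
    intro a
    have := intervalIntegral.integral_comp_neg (a := 0) (b := a) m
    simp only [heven, neg_zero] at this
    simp only [hh]
    rw [intervalIntegral.integral_symm, ← this]
  have hadd : ∀ a, h (a + Real.pi) = h a + h Real.pi := by
    intro a
    have := intervalIntegral.integral_comp_add_right (a := 0) (b := a) m Real.pi
    simp only [hper, zero_add] at this
    simp only [hh]
    rw [this]
    linarith [intervalIntegral.integral_add_adjacent_intervals (hI 0 Real.pi) (hI Real.pi (a + Real.pi))]
  have hP : 0 < h Real.pi := by rw [← h0]; exact hmono Real.pi_pos
  have hnat : ∀ n : ℕ, h (n * Real.pi) = n * h Real.pi := by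
    intro n
    induction n with
    | zero => simp [h0]
    | succ k ih => push_cast; rw [add_mul, one_mul, hadd, ih]; ring
  have hsurj : Function.Surjective h := by
    intro y
    obtain ⟨n, hn⟩ := exists_nat_gt (|y| / h Real.pi)
    rw [div_lt_iff₀ hP] at hn
    refine mem_range_of_exists_le_of_exists_ge hcont ⟨-(n * Real.pi), ?_⟩ ⟨n * Real.pi, ?_⟩
    · rw [hneg, hnat]; linarith [neg_abs_le y]
    · rw [hnat]; linarith [le_abs_self y]
  set e := hmono.orderIsoOfSurjective h hsurj with he
  have hea : ∀ x, h (e.symm x) = x := fun x => e.apply_symm_apply x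
  have hae : ∀ x, e.symm (h x) = x := fun x => e.symm_apply_apply x
  refine ⟨e.symm, h Real.pi, hP, fun x => ?_, ?_, fun x => ?_, fun x => ?_, ?_,
    e.symm.strictMono⟩
  · exact HasDerivAt.of_local_left_inverse e.symm.continuous.continuousAt (hd _) (hpos _).ne'
      (Eventually.of_forall hea)
  · rw [← h0, hae]; exact h0.symm ▸ rfl
  · apply hmono.injective; rw [hea, hadd, hea]
  · apply hmono.injective; rw [hea, hneg, hea]
  · apply hmono.injective; rw [hea]
    have := hadd (-(Real.pi / 2))
    rw [hneg, show -(Real.pi / 2) + Real.pi = Real.pi / 2 by ring] at this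
    linarith

lemma exists_pTrig {p : ℝ} (hp : 1 < p) : Nonempty (PTrig p) := by
  obtain ⟨r, hr⟩ : ∃ r, r = p / (p - 1) := ⟨_, rfl⟩
  have hp1 : 0 < p - 1 := by linarith
  have hr1 : 1 < r := by rw [hr, lt_div_iff₀ hp1]; linarith
  have hpr : (r - 1) * (p - 1) = 1 := by rw [hr]; field_simp; ring
  have hpr' : (p - 1) * (r - 1) = 1 := by linarith
  have hprod : p * (r - 1) = r := by linarith
  have hprod' : r * (p - 1) = p := by linarith
  set N : ℝ → ℝ := fun a => |Real.sin a| ^ p + |Real.cos a| ^ r with hN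
  have hNpos : ∀ a, 0 < N a := by
    intro a
    by_cases hs : Real.sin a = 0
    · have hc : Real.cos a ≠ 0 := by
        intro hc; have := Real.sin_sq_add_cos_sq a; rw [hs, hc] at this; norm_num at this
      have := Real.rpow_pos_of_pos (abs_pos.2 hc) r
      have := Real.rpow_nonneg (abs_nonneg (Real.sin a)) p
      simp only [hN]; linarith
    · have := Real.rpow_pos_of_pos (abs_pos.2 hs) p
      have := Real.rpow_nonneg (abs_nonneg (Real.cos a)) r
      simp only [hN]; linarith
  have hNd : ∀ a, HasDerivAt N (p * spow p (Real.sin a) * Real.cos a +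
      r * spow r (Real.cos a) * (-Real.sin a)) a := fun a =>
    ((hasDerivAt_abs_rpow' hp _).comp a (Real.hasDerivAt_sin a)).add
      ((hasDerivAt_abs_rpow' hr1 _).comp a (Real.hasDerivAt_cos a))
  have hNeq : ∀ a, N a = spow p (Real.sin a) * Real.sin a + spow r (Real.cos a) * Real.cos a := by
    intro a; rw [spow_mul_self (by linarith), spow_mul_self (by linarith)]
  have hNc : Continuous N := continuous_iff_continuousAt.2 fun a => (hNd a).continuousAt
  have hNadd : ∀ a, N (a + Real.pi) = N a := by intro a; simp [hN]
  have hNneg : ∀ a, N (-a) = N a := by intro a; simp [hN]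
  set m : ℝ → ℝ := fun a => (N a)⁻¹ * (Real.cos a ^ 2 + Real.sin a ^ 2 / (p - 1)) with hm
  have hmpos : ∀ a, 0 < m a := by
    intro a
    refine mul_pos (inv_pos.2 (hNpos a)) ?_
    by_cases hs : Real.sin a = 0
    · have := Real.sin_sq_add_cos_sq a
      rw [hs] at this ⊢
      rw [zero_pow two_ne_zero, zero_add] at this
      rw [this]; norm_num
    · have : 0 < Real.sin a ^ 2 / (p - 1) := by positivity
      nlinarith [sq_nonneg (Real.cos a)]
  have hmc : Continuous m := by
    refine (hNc.inv₀ fun a => (hNpos a).ne').mul ?_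
    fun_prop
  obtain ⟨α, P, hP, hα, hα0, hαadd, hαneg, hαhalf, hαmono⟩ :=
    exists_angle_reparametrization hmc hmpos
    (fun x => by simp [hm, hNadd]) (fun x => by simp [hm, hNneg])
  have hαc : Continuous α := continuous_iff_continuousAt.2 fun a => (hα a).continuousAt
  have hαP : α P = Real.pi := by have := hαadd 0; rwa [zero_add, hα0, zero_add] at this
  set S : ℝ → ℝ := fun a => Real.sin a * N a ^ (-1 / p) with hS
  set D : ℝ → ℝ := fun a => Real.cos a * N a ^ (-1 / r) with hD
  have hCeq : ∀ a, spow r (D a) = spow r (Real.cos a) * N a ^ (-1 / p) := by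
    intro a
    have h1 := Real.rpow_pos_of_pos (hNpos a) (-1 / r)
    rw [hD, spow_mul, spow_of_pos h1, ← Real.rpow_mul (hNpos a).le]
    congr 2
    field_simp; nlinarith
  have hSeq : ∀ a, spow p (S a) = spow p (Real.sin a) * N a ^ (-1 / r) := by
    intro a
    have h1 := Real.rpow_pos_of_pos (hNpos a) (-1 / p)
    rw [hS, spow_mul, spow_of_pos h1, ← Real.rpow_mul (hNpos a).le]
    congr 2
    field_simp; nlinarith
  have hSd : ∀ a, HasDerivAt S (spow r (D a) * m a) a := by
    intro a
    have h1 := (Real.hasDerivAt_sin a).mul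
      ((hNd a).rpow_const (p := -1 / p) (Or.inl (hNpos a).ne'))
    refine HasDerivAt.congr_deriv h1 ?_
    have hN0 := (hNpos a).ne'
    rw [hCeq, Real.rpow_sub_one hN0]
    simp only [hm]
    have h2 := hNeq a
    have hp1' := hp1.ne'
    have hp0 : p ≠ 0 := by linarith
    have hrr : r = p / (p - 1) := hr
    generalize N a ^ (-1 / p) = X
    generalize spow p (Real.sin a) = u at *
    generalize spow r (Real.cos a) = v at *
    generalize Real.sin a = s at *
    generalize Real.cos a = c at *
    generalize N a = n at *
    rw [hrr]
    field_simp
    rw [h2]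
    ring
  have hDd : ∀ a, HasDerivAt D (-(p - 1) * spow p (S a) * m a) a := by
    intro a
    have h1 := (Real.hasDerivAt_cos a).mul
      ((hNd a).rpow_const (p := -1 / r) (Or.inl (hNpos a).ne'))
    refine HasDerivAt.congr_deriv h1 ?_
    have hN0 := (hNpos a).ne'
    rw [hSeq, Real.rpow_sub_one hN0]
    simp only [hm]
    have h2 := hNeq a
    have hp1' := hp1.ne'
    have hr0 : r ≠ 0 := by linarith
    generalize N a ^ (-1 / r) = X
    generalize spow p (Real.sin a) = u at *
    generalize spow r (Real.cos a) = v at *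
    generalize Real.sin a = s at *
    generalize Real.cos a = c at *
    generalize N a = n at *
    field_simp
    rw [h2]
    linear_combination (X * c ^ 2 * u) * hprod'
  have hCinv : ∀ a, spow p (spow r (D a)) = D a := fun a => spow_spow hr1 hpr (D a)
  refine ⟨⟨fun x => S (α x), fun x => spow r (D (α x)), P, hP, fun x => ?_, fun x => ?_, ?_,
    fun x => ?_, fun x => ?_, fun x => ?_, fun x => ?_, fun x => ?_, fun x h0 h1 => ?_,
    fun x h0 h1 => ?_, ?_⟩⟩
  · refine HasDerivAt.congr_deriv ((hSd (α x)).comp x (hα x)) ?_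
    field_simp [(hmpos (α x)).ne']
  · simp only [hCinv]
    refine HasDerivAt.congr_deriv ((hDd (α x)).comp x (hα x)) ?_
    field_simp [(hmpos (α x)).ne']
  · have : Continuous D := continuous_iff_continuousAt.2 fun a => (hDd a).continuousAt
    exact (continuous_spow hr1).comp (this.comp hαc)
  · have hn := hNpos (α x)
    rw [abs_spow hr1, ← Real.rpow_mul (abs_nonneg _), mul_comm (r - 1) p, hprod, hS, hD,
      abs_mul, abs_mul, abs_of_pos (Real.rpow_pos_of_pos hn _),
      abs_of_pos (Real.rpow_pos_of_pos hn _),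
      Real.mul_rpow (abs_nonneg _) (Real.rpow_nonneg hn.le _),
      Real.mul_rpow (abs_nonneg _) (Real.rpow_nonneg hn.le _), ← Real.rpow_mul hn.le,
      ← Real.rpow_mul hn.le, div_mul_cancel₀ _ (by linarith), div_mul_cancel₀ _ (by linarith),
      ← add_mul, Real.rpow_neg_one]
    exact mul_inv_cancel₀ hn.ne'
  · simp [hS, hαadd, hNadd]
  · simp [hD, hαadd, hNadd, spow_neg]
  · simp [hS, hαneg, hNneg]
  · simp [hD, hαneg, hNneg]
  · refine mul_pos (Real.sin_pos_of_pos_of_lt_pi ?_ ?_) (Real.rpow_pos_of_pos (hNpos _) _)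
    · rw [← hα0]; exact hαmono h0
    · rw [← hαP]; exact hαmono h1
  · have hc : 0 < Real.cos (α x) := by
      refine Real.cos_pos_of_mem_Ioo ⟨?_, ?_⟩
      · have : α 0 ≤ α x := hαmono.monotone h0
        rw [hα0] at this; linarith [Real.pi_pos]
      · rw [← hαhalf]; exact hαmono h1
    have hd : 0 < D (α x) := mul_pos hc (Real.rpow_pos_of_pos (hNpos _) _)
    rw [spow_of_pos hd]
    exact Real.rpow_pos_of_pos hd _
  · simp [hD, hαhalf, spow_zero]

namespace PTrig

variable {p : ℝ} (T : PTrig p)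

/-- The potential `|S| ^ p`. -/
noncomputable def F (x : ℝ) : ℝ := |T.S x| ^ p

/-- The normalised derivative of `F`. -/
noncomputable def f (x : ℝ) : ℝ := spow p (T.S x) * T.C x

lemma continuous_S : Continuous T.S := continuous_iff_continuousAt.2 fun x => (T.deriv_S x).continuousAt

lemma continuous_f (hp : 1 < p) : Continuous T.f :=
  ((continuous_spow hp).comp T.continuous_S).mul T.cont_C

lemma hasDerivAt_F (hp : 1 < p) (x : ℝ) : HasDerivAt T.F (p * T.f x) x := by
  have := (hasDerivAt_abs_rpow' hp (T.S x)).comp x (T.deriv_S x)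
  unfold f
  rw [← mul_assoc]
  exact this

lemma continuous_F (hp : 1 < p) : Continuous T.F :=
  continuous_iff_continuousAt.2 fun x => (T.hasDerivAt_F hp x).continuousAt

lemma F_nonneg (x : ℝ) : 0 ≤ T.F x := Real.rpow_nonneg (abs_nonneg _) _

lemma abs_C_rpow (x : ℝ) : |T.C x| ^ p = 1 - T.F x := by
  have := T.pyth x
  unfold F; linarith

lemma F_le_one (x : ℝ) : T.F x ≤ 1 := by
  have h := T.abs_C_rpow x
  have : 0 ≤ |T.C x| ^ p := Real.rpow_nonneg (abs_nonneg _) _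
  linarith

lemma S_zero : T.S 0 = 0 := by
  have := T.S_neg 0
  rw [neg_zero] at this; linarith

lemma F_zero (hp : 1 < p) : T.F 0 = 0 := by
  rw [F, T.S_zero, abs_zero, Real.zero_rpow (by linarith)]

lemma F_half (hp : 1 < p) : T.F (T.P / 2) = 1 := by
  have := T.abs_C_rpow (T.P / 2)
  rw [T.C_half, abs_zero, Real.zero_rpow (by linarith)] at this
  linarith

lemma F_pos {x : ℝ} (h0 : 0 < x) (h1 : x < T.P) : 0 < T.F x :=
  Real.rpow_pos_of_pos (abs_pos.2 (T.S_pos x h0 h1).ne') _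

lemma F_add (x : ℝ) : T.F (x + T.P) = T.F x := by simp [F, T.S_add]

lemma F_neg (x : ℝ) : T.F (-x) = T.F x := by simp [F, T.S_neg]

lemma f_add (x : ℝ) : T.f (x + T.P) = T.f x := by simp [f, T.S_add, T.C_add, spow_neg]

lemma f_neg (x : ℝ) : T.f (-x) = -T.f x := by simp [f, T.S_neg, T.C_neg, spow_neg]

lemma F_add_nat (x : ℝ) (k : ℕ) : T.F (x + k * T.P) = T.F x := by
  induction k with
  | zero => simp
  | succ k ih => rw [← ih, ← T.F_add (x + k * T.P)]; push_cast; ring_nf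

lemma f_add_nat (x : ℝ) (k : ℕ) : T.f (x + k * T.P) = T.f x := by
  induction k with
  | zero => simp
  | succ k ih => rw [← ih, ← T.f_add (x + k * T.P)]; push_cast; ring_nf

lemma F_sub_nat (x : ℝ) (k : ℕ) : T.F (k * T.P - x) = T.F x := by
  rw [← T.F_neg x, ← T.F_add_nat (-x) k]; ring_nf

lemma f_sub_nat (x : ℝ) (k : ℕ) : T.f (k * T.P - x) = -T.f x := by
  rw [← T.f_neg x, ← T.f_add_nat (-x) k]; ring_nf

lemma S_add_int (x : ℝ) (k : ℤ) : |T.S (x + k * T.P)| = |T.S x| := by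
  induction k using Int.induction_on with
  | zero => simp
  | succ k ih =>
    have h : x + ((k : ℤ) + 1 : ℤ) * T.P = x + (k : ℤ) * T.P + T.P := by push_cast; ring
    rw [h, T.S_add, abs_neg, ih]
  | pred k ih =>
    have h : x + (-(k : ℤ) : ℤ) * T.P = x + (-(k : ℤ) - 1 : ℤ) * T.P + T.P := by push_cast; ring
    rw [← ih, h, T.S_add, abs_neg]

lemma S_int (k : ℤ) : T.S (k * T.P) = 0 := by
  have := T.S_add_int 0 k
  rwa [T.S_zero, zero_add, abs_zero, abs_eq_zero] at this

lemma eq_int_of_S_eq_zero {x : ℝ} (h : T.S x = 0) : ∃ k : ℤ, x = k * T.P := by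
  refine ⟨⌊x / T.P⌋, ?_⟩
  set k := ⌊x / T.P⌋
  have h1 : (k : ℝ) * T.P ≤ x := (le_div_iff₀ T.P_pos).1 (Int.floor_le _)
  have h2 : x < (k + 1 : ℝ) * T.P := (div_lt_iff₀ T.P_pos).1 (Int.lt_floor_add_one _)
  by_contra hne
  have h3 := T.S_pos (x - k * T.P) (by
    rcases h1.lt_or_eq with h | h
    · linarith
    · exact absurd h.symm hne) (by linarith)
  have h4 := T.S_add_int (x - k * T.P) k
  rw [sub_add_cancel, h, abs_zero] at h4
  exact h3.ne' (abs_eq_zero.1 h4.symm)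

lemma abs_S_le_one (hp : 1 < p) (x : ℝ) : |T.S x| ≤ 1 := by
  by_contra! h
  exact (Real.one_lt_rpow h (by linarith : 0 < p)).not_ge (T.F_le_one x)

lemma abs_C_le_one (hp : 1 < p) (x : ℝ) : |T.C x| ≤ 1 := by
  by_contra! h
  have h1 := Real.one_lt_rpow h (by linarith : 0 < p)
  rw [T.abs_C_rpow] at h1
  linarith [T.F_nonneg x]

lemma abs_f_le_one (hp : 1 < p) (x : ℝ) : |T.f x| ≤ 1 := by
  rw [f, abs_mul, abs_spow hp]
  exact mul_le_one₀ (Real.rpow_le_one (abs_nonneg _) (T.abs_S_le_one hp x) (by linarith))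
    (abs_nonneg _) (T.abs_C_le_one hp x)

lemma S_strictMonoOn : StrictMonoOn T.S (Icc 0 (T.P / 2)) := by
  refine strictMonoOn_of_deriv_pos (convex_Icc _ _) T.continuous_S.continuousOn ?_
  intro x hx
  rw [interior_Icc] at hx
  rw [(T.deriv_S x).deriv]
  exact T.C_pos x hx.1.le hx.2

lemma S_nonneg {x : ℝ} (h0 : 0 ≤ x) (h1 : x ≤ T.P / 2) : 0 ≤ T.S x := by
  rcases h0.eq_or_lt with rfl | h
  · rw [T.S_zero]
  · exact (T.S_pos x h (by linarith [T.P_pos])).le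

lemma C_nonneg {x : ℝ} (h0 : 0 ≤ x) (h1 : x ≤ T.P / 2) : 0 ≤ T.C x := by
  rcases h1.eq_or_lt with rfl | h
  · rw [T.C_half]
  · exact (T.C_pos x h0 h).le

lemma C_lt (hp : 1 < p) {x y : ℝ} (h0 : 0 ≤ x) (hxy : x < y) (h1 : y ≤ T.P / 2) : T.C y < T.C x := by
  have hS := T.S_strictMonoOn ⟨h0, by linarith⟩ ⟨by linarith, h1⟩ hxy
  have h2 : T.F x < T.F y := by
    unfold F
    rw [abs_of_nonneg (T.S_nonneg h0 (by linarith)), abs_of_nonneg (T.S_nonneg (by linarith) h1)]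
    exact Real.rpow_lt_rpow (T.S_nonneg h0 (by linarith)) hS (by linarith)
  have hx := T.abs_C_rpow x
  have hy := T.abs_C_rpow y
  have hcx := T.C_nonneg h0 (by linarith : x ≤ T.P / 2)
  have hcy := T.C_nonneg (by linarith : 0 ≤ y) h1
  rw [abs_of_nonneg hcx] at hx
  rw [abs_of_nonneg hcy] at hy
  by_contra! h
  have := Real.rpow_le_rpow hcx h (by linarith : 0 ≤ p)
  linarith

lemma f_nonneg {x : ℝ} (h0 : 0 ≤ x) (h1 : x ≤ T.P / 2) : 0 ≤ T.f x :=
  mul_nonneg (mul_nonneg (Real.rpow_nonneg (abs_nonneg _) _) (T.S_nonneg h0 h1)) (T.C_nonneg h0 h1)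

lemma mul_f_lt_F (hp : 1 < p) {x : ℝ} (h0 : 0 < x) (h1 : x ≤ T.P / 2) : x * T.f x < T.F x := by
  obtain ⟨c, hc, hc'⟩ := exists_hasDerivAt_eq_slope T.S T.C h0 T.continuous_S.continuousOn
    fun y _ => T.deriv_S y
  rw [T.S_zero, sub_zero, sub_zero, eq_div_iff h0.ne'] at hc'
  have hC := T.C_lt hp hc.1.le hc.2 h1
  have hS : 0 < T.S x := T.S_pos x h0 (by linarith [T.P_pos])
  have h2 : T.F x = spow p (T.S x) * T.S x := (spow_mul_self (by linarith) _).symm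
  have h3 : 0 < spow p (T.S x) := by rw [spow_of_pos hS]; positivity
  have h4 : x * T.C x < T.S x := by rw [← hc']; nlinarith
  rw [h2, f]
  linarith [mul_lt_mul_of_pos_left h4 h3]

lemma mul_f_le_F (hp : 1 < p) {x : ℝ} (h0 : 0 ≤ x) (h1 : x ≤ T.P / 2) : x * T.f x ≤ T.F x := by
  rcases h0.eq_or_lt with rfl | h
  · rw [zero_mul]; exact T.F_nonneg _
  · exact (T.mul_f_lt_F hp h h1).le

end PTrig

/-- The divided difference of a function with continuous derivative `g`. -/
noncomputable def divDiff (g : ℝ → ℝ) (u v : ℝ) : ℝ := ∫ t in (0 : ℝ)..1, g (u + t * (v - u))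

lemma continuous_divDiff {g : ℝ → ℝ} (hg : Continuous g) :
    Continuous fun z : ℝ × ℝ => divDiff g z.1 z.2 := by
  unfold divDiff
  refine intervalIntegral.continuous_parametric_intervalIntegral_of_continuous' ?_ 0 1
  unfold Function.uncurry
  fun_prop

lemma divDiff_self (g : ℝ → ℝ) (u : ℝ) : divDiff g u u = g u := by simp [divDiff]

lemma divDiff_mul {G g : ℝ → ℝ} (hG : ∀ x, HasDerivAt G (g x) x) (hg : Continuous g) (u v : ℝ) :
    divDiff g u v * (v - u) = G v - G u := by
  have h : ∀ t ∈ uIcc (0 : ℝ) 1,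
      HasDerivAt (fun t => G (u + t * (v - u))) (g (u + t * (v - u)) * (v - u)) t := by
    intro t _
    have h1 : HasDerivAt (fun t => u + t * (v - u)) (v - u) t := by
      simpa using ((hasDerivAt_id t).mul_const (v - u)).const_add u
    exact (hG _).comp t h1
  have := intervalIntegral.integral_eq_sub_of_hasDerivAt h
    (Continuous.intervalIntegrable (by fun_prop) _ _)
  rw [intervalIntegral.integral_mul_const] at this
  rw [divDiff, this]
  simp

lemma abs_divDiff_le {g : ℝ → ℝ} {M : ℝ} (hM : ∀ x, |g x| ≤ M) (u v : ℝ) :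
    |divDiff g u v| ≤ M := by
  have := intervalIntegral.norm_integral_le_of_norm_le_const (a := 0) (b := 1)
    (f := fun t => g (u + t * (v - u))) (C := M) fun t _ => hM _
  simpa [divDiff] using this

lemma hasDerivAt_of_eq_mul {f Ψ : ℝ → ℝ} {s : ℝ} (hΨ : ContinuousAt Ψ s)
    (h : ∀ t, f t - f s = (t - s) * Ψ t) : HasDerivAt f (Ψ s) s := by
  rw [hasDerivAt_iff_tendsto_slope]
  refine (hΨ.tendsto.mono_left nhdsWithin_le_nhds).congr' ?_
  filter_upwards [self_mem_nhdsWithin] with t ht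
  have : t - s ≠ 0 := sub_ne_zero.2 ht
  rw [slope_def_field, h t]
  field_simp

lemma linear_ode {δ α A : ℝ → ℝ} (hα : Continuous α) (hA : Continuous A)
    (h : ∀ x, HasDerivAt δ (α x + A x * δ x) x) (x : ℝ) :
    δ x * Real.exp (-∫ t in (0 : ℝ)..x, A t) =
      δ 0 + ∫ t in (0 : ℝ)..x, α t * Real.exp (-∫ r in (0 : ℝ)..t, A r) := by
  have hI : ∀ x, HasDerivAt (fun x => ∫ t in (0 : ℝ)..x, A t) (A x) x := fun x =>
    (hA.integral_hasStrictDerivAt 0 x).hasDerivAt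
  have hIc : Continuous fun x => ∫ t in (0 : ℝ)..x, A t :=
    continuous_iff_continuousAt.2 fun x => (hI x).continuousAt
  have hd : ∀ t ∈ uIcc (0 : ℝ) x,
      HasDerivAt (fun x => δ x * Real.exp (-∫ t in (0 : ℝ)..x, A t))
        (α t * Real.exp (-∫ r in (0 : ℝ)..t, A r)) t := by
    intro t _
    refine ((h t).fun_mul ((hI t).fun_neg.exp)).congr_deriv ?_
    ring
  have := intervalIntegral.integral_eq_sub_of_hasDerivAt hd
    (Continuous.intervalIntegrable (by fun_prop) _ _)
  simp only [intervalIntegral.integral_same, neg_zero, Real.exp_zero, mul_one] at this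
  rw [this]; ring

namespace PTrig

variable {p : ℝ} (T : PTrig p)

/-- The divided difference of `F`. -/
noncomputable def Fdiff (u v : ℝ) : ℝ := divDiff (fun x => p * T.f x) u v

lemma continuous_Fdiff (hp : 1 < p) : Continuous fun z : ℝ × ℝ => T.Fdiff z.1 z.2 :=
  continuous_divDiff (continuous_const.mul (T.continuous_f hp))

lemma Fdiff_mul (hp : 1 < p) (u v : ℝ) : T.Fdiff u v * (v - u) = T.F v - T.F u :=
  divDiff_mul (T.hasDerivAt_F hp) (continuous_const.mul (T.continuous_f hp)) u v

lemma Fdiff_self (u : ℝ) : T.Fdiff u u = p * T.f u := divDiff_self _ _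

lemma abs_Fdiff_le (hp : 1 < p) (u v : ℝ) : |T.Fdiff u v| ≤ p :=
  abs_divDiff_le (fun x => by
    rw [abs_mul, abs_of_pos (by linarith : 0 < p)]
    exact mul_le_of_le_one_right (by linarith) (T.abs_f_le_one hp x)) u v

lemma dist_F_le (hp : 1 < p) (u v : ℝ) : |T.F v - T.F u| ≤ p * |v - u| := by
  rw [← T.Fdiff_mul hp, abs_mul]
  exact mul_le_mul_of_nonneg_right (T.abs_Fdiff_le hp u v) (abs_nonneg _)

/-- `φ` solves the angle equation `φ' = a + k F(φ)`. -/
def Angle (a : ℝ) (k φ : ℝ → ℝ) : Prop := ∀ x, HasDerivAt φ (a + k x * T.F (φ x)) x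

variable {T}

lemma Angle.continuous {a : ℝ} {k φ : ℝ → ℝ} (h : T.Angle a k φ) : Continuous φ :=
  continuous_iff_continuousAt.2 fun x => (h x).continuousAt

lemma Angle.sub_mul_exp (hp : 1 < p) {a₁ a₂ : ℝ} {k₁ k₂ φ₁ φ₂ : ℝ → ℝ} (hk₁ : Continuous k₁)
    (hk₂ : Continuous k₂) (h₁ : T.Angle a₁ k₁ φ₁) (h₂ : T.Angle a₂ k₂ φ₂) (x : ℝ) :
    (φ₂ x - φ₁ x) * Real.exp (-∫ t in (0 : ℝ)..x, k₂ t * T.Fdiff (φ₁ t) (φ₂ t)) =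
      (φ₂ 0 - φ₁ 0) + ∫ t in (0 : ℝ)..x, ((a₂ - a₁) + (k₂ t - k₁ t) * T.F (φ₁ t)) *
        Real.exp (-∫ r in (0 : ℝ)..t, k₂ r * T.Fdiff (φ₁ r) (φ₂ r)) := by
  have c₁ := h₁.continuous
  have c₂ := h₂.continuous
  have cF := T.continuous_F hp
  refine linear_ode (δ := fun x => φ₂ x - φ₁ x)
    (A := fun t => k₂ t * T.Fdiff (φ₁ t) (φ₂ t)) (by fun_prop)
    (hk₂.mul ((T.continuous_Fdiff hp).comp (c₁.prodMk c₂))) (fun x => ?_) x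
  refine ((h₂ x).fun_sub (h₁ x)).congr_deriv ?_
  linear_combination -k₂ x * T.Fdiff_mul hp (φ₁ x) (φ₂ x)

lemma Angle.eqOn (hp : 1 < p) {a : ℝ} {k₁ k₂ φ₁ φ₂ : ℝ → ℝ} (hk₁ : Continuous k₁)
    (hk₂ : Continuous k₂) (h₁ : T.Angle a k₁ φ₁) (h₂ : T.Angle a k₂ φ₂) (h0 : φ₁ 0 = φ₂ 0)
    {c : ℝ} (hk : EqOn k₁ k₂ (Icc 0 c)) : EqOn φ₁ φ₂ (Icc 0 c) := by
  intro x hx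
  have := h₁.sub_mul_exp hp hk₁ hk₂ h₂ x
  rw [intervalIntegral.integral_congr (a := 0) (b := x) (g := fun _ => (0 : ℝ)) (f := fun t =>
    ((a - a) + (k₂ t - k₁ t) * T.F (φ₁ t)) *
        Real.exp (-∫ r in (0 : ℝ)..t, k₂ r * T.Fdiff (φ₁ r) (φ₂ r))) ?_, h0,
    intervalIntegral.integral_zero, sub_self, add_zero, mul_eq_zero] at this
  · linarith [this.resolve_right (Real.exp_ne_zero _)]
  · intro t ht
    rw [uIcc_of_le hx.1] at ht
    simp only [hk ⟨ht.1, ht.2.trans hx.2⟩]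
    ring

lemma Angle.lt_of_lt (hp : 1 < p) {a₁ a₂ : ℝ} {k₁ k₂ φ₁ φ₂ : ℝ → ℝ} (hk₁ : Continuous k₁)
    (hk₂ : Continuous k₂) (h₁ : T.Angle a₁ k₁ φ₁) (h₂ : T.Angle a₂ k₂ φ₂) (h0 : φ₁ 0 ≤ φ₂ 0)
    {x : ℝ} (hx : 0 ≤ x)
    (hle : ∀ t ∈ Icc 0 x, 0 ≤ (a₂ - a₁) + (k₂ t - k₁ t) * T.F (φ₁ t))
    (hlt : φ₁ 0 < φ₂ 0 ∨ ∃ t ∈ Icc 0 x, 0 < x ∧ 0 < (a₂ - a₁) + (k₂ t - k₁ t) * T.F (φ₁ t)) :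
    φ₁ x < φ₂ x := by
  have c₁ := h₁.continuous
  have c₂ := h₂.continuous
  have cF := T.continuous_F hp
  have cQ := T.continuous_Fdiff hp
  have cI : Continuous fun x => ∫ t in (0 : ℝ)..x, k₂ t * T.Fdiff (φ₁ t) (φ₂ t) :=
    intervalIntegral.continuous_primitive (fun a b => Continuous.intervalIntegrable
      (hk₂.mul (cQ.comp (c₁.prodMk c₂))) a b) 0
  have h := h₁.sub_mul_exp hp hk₁ hk₂ h₂ x
  have hE : 0 < Real.exp (-∫ t in (0 : ℝ)..x, k₂ t * T.Fdiff (φ₁ t) (φ₂ t)) := Real.exp_pos _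
  suffices 0 < (φ₂ x - φ₁ x) * Real.exp (-∫ t in (0 : ℝ)..x, k₂ t * T.Fdiff (φ₁ t) (φ₂ t)) by
    have := pos_of_mul_pos_left this hE.le
    linarith
  rw [h]
  have hn : ∀ t ∈ Icc 0 x, 0 ≤ ((a₂ - a₁) + (k₂ t - k₁ t) * T.F (φ₁ t)) *
        Real.exp (-∫ r in (0 : ℝ)..t, k₂ r * T.Fdiff (φ₁ r) (φ₂ r)) := fun t ht =>
    mul_nonneg (hle t ht) (Real.exp_pos _).le
  rcases hlt with hlt | ⟨t, ht, hx0, hlt⟩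
  · have := intervalIntegral.integral_nonneg (μ := volume) hx hn
    linarith
  · have := intervalIntegral.integral_pos hx0 (Continuous.continuousOn (by fun_prop))
      (fun t ht => hn t (Ioc_subset_Icc_self ht)) ⟨t, ht, mul_pos hlt (Real.exp_pos _)⟩
    linarith

end PTrig

namespace PTrig

variable {p : ℝ} {T : PTrig p}

lemma lipschitz_rhs (hp : 1 < p) {K : ℝ} (hK : 0 ≤ K) {a k : ℝ} (hk : |k| ≤ K) :
    LipschitzWith (K * p).toNNReal fun x => a + k * T.F x := by
  refine LipschitzWith.of_dist_le_mul fun x y => ?_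
  rw [Real.dist_eq, Real.dist_eq, Real.coe_toNNReal _ (by positivity),
    show a + k * T.F x - (a + k * T.F y) = k * (T.F x - T.F y) by ring, abs_mul, mul_assoc]
  exact mul_le_mul hk (T.dist_F_le hp y x) (abs_nonneg _) hK

lemma exists_local_angle (hp : 1 < p) (a : ℝ) {k : ℝ → ℝ} (hk : Continuous k) {K : ℝ}
    (hK : ∀ x, |k x| ≤ K) (N : ℕ) :
    ∃ φ : ℝ → ℝ, φ 0 = 0 ∧
      ∀ x ∈ Ioo (-((N : ℝ) + 1)) (N + 1), HasDerivAt φ (a + k x * T.F (φ x)) x := by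
  have hK0 : 0 ≤ K := (abs_nonneg _).trans (hK 0)
  have hN : (0 : ℝ) < N + 1 := by positivity
  have hL : 0 ≤ |a| + K := by positivity
  have pl : IsPicardLindelof (fun t x => a + k t * T.F x) (tmin := -((N : ℝ) + 1)) (tmax := N + 1)
      ⟨0, by linarith, by linarith⟩ 0 ((|a| + K) * (N + 1)).toNNReal 0 (|a| + K).toNNReal
      (K * p).toNNReal := by
    refine ⟨fun t _ => (lipschitz_rhs hp hK0 (hK t)).lipschitzOnWith, fun x _ => by fun_prop,
      fun t _ x _ => ?_, ?_⟩
    · rw [Real.coe_toNNReal _ hL, Real.norm_eq_abs]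
      refine (abs_add_le _ _).trans ?_
      rw [abs_mul, abs_of_nonneg (T.F_nonneg x)]
      have := mul_le_mul (hK t) (T.F_le_one x) (T.F_nonneg x) hK0
      linarith
    · rw [Real.coe_toNNReal _ hL, Real.coe_toNNReal _ (by positivity)]
      simp
  obtain ⟨φ, h0, h⟩ := pl.exists_eq_forall_mem_Icc_hasDerivWithinAt₀
  exact ⟨φ, h0, fun x hx => (h x (Ioo_subset_Icc_self hx)).hasDerivAt (Icc_mem_nhds hx.1 hx.2)⟩

lemma exists_angle (hp : 1 < p) (a : ℝ) {k : ℝ → ℝ} (hk : Continuous k) {K : ℝ}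
    (hK : ∀ x, |k x| ≤ K) : ∃ φ : ℝ → ℝ, φ 0 = 0 ∧ T.Angle a k φ := by
  choose φ h0 h using exists_local_angle (T := T) hp a hk hK
  have hK0 : 0 ≤ K := (abs_nonneg _).trans (hK 0)
  have key : ∀ n m : ℕ, n ≤ m → EqOn (φ n) (φ m) (Ioo (-((n : ℝ) + 1)) (n + 1)) := by
    intro n m hnm
    have hc : (n : ℝ) ≤ m := by exact_mod_cast hnm
    have hn : (0 : ℝ) ≤ n := by positivity
    refine ODE_solution_unique_of_mem_Ioo (v := fun t x => a + k t * T.F x) (s := fun _ => univ)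
      (t₀ := 0) (fun t _ => (lipschitz_rhs hp hK0 (hK t)).lipschitzOnWith)
      ⟨by linarith, by linarith⟩ (fun t ht => ⟨h n t ht, trivial⟩)
      (fun t ht => ⟨h m t ⟨by linarith [ht.1], by linarith [ht.2]⟩, trivial⟩) (by rw [h0, h0])
  have hmem : ∀ x : ℝ, x ∈ Ioo (-((⌈|x|⌉₊ : ℝ) + 1)) (⌈|x|⌉₊ + 1) := by
    intro x
    have := Nat.le_ceil |x|
    exact ⟨by linarith [neg_abs_le x], by linarith [le_abs_self x]⟩
  refine ⟨fun x => φ ⌈|x|⌉₊ x, h0 _, fun x => ?_⟩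
  refine (h _ x (hmem x)).congr_of_eventuallyEq ?_
  filter_upwards [isOpen_Ioo.mem_nhds (hmem x)] with y hy
  rcases le_total ⌈|x|⌉₊ ⌈|y|⌉₊ with hle | hle
  · exact (key _ _ hle hy).symm
  · exact key _ _ hle (hmem y)

lemma abs_sub_le_of_angle (hp : 1 < p) {a₁ a₂ : ℝ} {k₁ k₂ φ₁ φ₂ : ℝ → ℝ} (hk₁ : Continuous k₁)
    (hk₂ : Continuous k₂) (h₁ : T.Angle a₁ k₁ φ₁) (h₂ : T.Angle a₂ k₂ φ₂) (h0 : φ₁ 0 = φ₂ 0)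
    {K ε R : ℝ} (hK : ∀ t, |k₂ t| ≤ K) (hε : ∀ t, |a₂ - a₁| + |k₂ t - k₁ t| ≤ ε) {x : ℝ}
    (hx : |x| ≤ R) : |φ₂ x - φ₁ x| ≤ R * ε * Real.exp (2 * (K * p * R)) := by
  have hR : 0 ≤ R := (abs_nonneg _).trans hx
  have hK0 : 0 ≤ K := (abs_nonneg _).trans (hK 0)
  have hε0 : 0 ≤ ε := le_trans (by positivity) (hε 0)
  have hA : ∀ t, |t| ≤ R → |∫ r in (0 : ℝ)..t, k₂ r * T.Fdiff (φ₁ r) (φ₂ r)| ≤ K * p * R := by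
    intro t ht
    have := intervalIntegral.norm_integral_le_of_norm_le_const (a := 0) (b := t)
      (f := fun r => k₂ r * T.Fdiff (φ₁ r) (φ₂ r)) (C := K * p) fun r _ => by
        rw [Real.norm_eq_abs, abs_mul]
        exact mul_le_mul (hK r) (T.abs_Fdiff_le hp _ _) (abs_nonneg _) hK0
    rw [sub_zero, Real.norm_eq_abs] at this
    exact this.trans (by gcongr)
  have h := h₁.sub_mul_exp hp hk₁ hk₂ h₂ x
  rw [h0, sub_self, zero_add] at h
  have hI := intervalIntegral.norm_integral_le_of_norm_le_const (a := 0) (b := x)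
      (f := fun t => ((a₂ - a₁) + (k₂ t - k₁ t) * T.F (φ₁ t)) *
        Real.exp (-∫ r in (0 : ℝ)..t, k₂ r * T.Fdiff (φ₁ r) (φ₂ r)))
      (C := ε * Real.exp (K * p * R)) fun t ht => by
        have htR : |t| ≤ R := by
          rcases le_total 0 x with h | h
          · rw [uIoc_of_le h] at ht
            rw [abs_of_pos ht.1]; exact ht.2.trans ((le_abs_self x).trans hx)
          · rw [uIoc_of_ge h] at ht
            rw [abs_of_nonpos ht.2]; linarith [ht.1, neg_abs_le x]
        rw [Real.norm_eq_abs, abs_mul, abs_of_pos (Real.exp_pos _)]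
        refine mul_le_mul ((abs_add_le _ _).trans ?_) (Real.exp_le_exp.2 ?_) (Real.exp_pos _).le hε0
        · refine le_trans ?_ (hε t)
          rw [abs_mul, abs_of_nonneg (T.F_nonneg _)]
          gcongr
          exact mul_le_of_le_one_right (abs_nonneg _) (T.F_le_one _)
        · linarith [neg_abs_le (∫ r in (0 : ℝ)..t, k₂ r * T.Fdiff (φ₁ r) (φ₂ r)), hA t htR]
  rw [sub_zero, Real.norm_eq_abs, ← h, abs_mul, abs_of_pos (Real.exp_pos _), Real.exp_neg,
    ← div_eq_mul_inv, div_le_iff₀ (Real.exp_pos _)] at hI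
  refine hI.trans ?_
  rw [show R * ε * Real.exp (2 * (K * p * R)) =
    ε * Real.exp (K * p * R) * R * Real.exp (K * p * R) by rw [two_mul, Real.exp_add]; ring]
  gcongr
  exact (le_abs_self _).trans (hA x hx)

lemma continuous_angle_family (hp : 1 < p) {a c₀ c₁ h : ℝ → ℝ} (ha : Continuous a)
    (hc₀ : Continuous c₀) (hc₁ : Continuous c₁) (hh : Continuous h) {B : ℝ}
    (hB : ∀ x, |h x| ≤ B) {φ : ℝ → ℝ → ℝ} (h0 : ∀ s, φ s 0 = 0)
    (hφ : ∀ s, T.Angle (a s) (fun x => c₀ s + c₁ s * h x) (φ s)) :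
    Continuous fun z : ℝ × ℝ => φ z.1 z.2 := by
  rw [continuous_iff_continuousAt]
  rintro ⟨s₀, x₀⟩
  set R := |x₀| + 1
  set ε : ℝ → ℝ := fun s => |a s - a s₀| + (|c₀ s - c₀ s₀| + |c₁ s - c₁ s₀| * B) with hεd
  set K : ℝ → ℝ := fun s => |c₀ s| + |c₁ s| * B with hKd
  have hε : Tendsto (fun z : ℝ × ℝ => R * ε z.1 * Real.exp (2 * (K z.1 * p * R)) +
      |φ s₀ z.2 - φ s₀ x₀|) (𝓝 (s₀, x₀)) (𝓝 0) := by
    have hc : Continuous fun z : ℝ × ℝ => R * ε z.1 * Real.exp (2 * (K z.1 * p * R)) +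
        |φ s₀ z.2 - φ s₀ x₀| := by
      have := (hφ s₀).continuous
      fun_prop
    have := hc.tendsto (s₀, x₀)
    simpa [ε] using this
  rw [ContinuousAt, tendsto_iff_dist_tendsto_zero]
  refine squeeze_zero' (Eventually.of_forall fun _ => dist_nonneg) ?_ hε
  have hev : ∀ᶠ z : ℝ × ℝ in 𝓝 (s₀, x₀), |z.2| < R :=
    (by fun_prop : Continuous fun z : ℝ × ℝ => |z.2|).continuousAt.eventually_lt
      continuousAt_const (by simp [R])
  filter_upwards [hev] with z hz
  rw [Real.dist_eq]
  refine (abs_sub_le _ (φ s₀ z.2) _).trans (add_le_add ?_ le_rfl)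
  refine abs_sub_le_of_angle hp (by fun_prop) (by fun_prop) (hφ s₀) (hφ z.1) (by rw [h0, h0])
    (fun t => ?_) (fun t => ?_) hz.le
  · refine (abs_add_le _ _).trans (add_le_add le_rfl ?_)
    rw [abs_mul]
    exact mul_le_mul_of_nonneg_left (hB t) (abs_nonneg _)
  · refine add_le_add le_rfl ?_
    rw [show c₀ z.1 + c₁ z.1 * h t - (c₀ s₀ + c₁ s₀ * h t) =
      (c₀ z.1 - c₀ s₀) + (c₁ z.1 - c₁ s₀) * h t by ring]
    refine (abs_add_le _ _).trans (add_le_add le_rfl ?_)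
    rw [abs_mul]
    exact mul_le_mul_of_nonneg_left (hB t) (abs_nonneg _)

end PTrig

lemma riccati_unique {s : ℝ} (hs : 1 < s) {a b B : ℝ} {α β f g : ℝ → ℝ}
    (hβ : ∀ t ∈ Icc a b, |β t| ≤ B)
    (hf : ∀ t ∈ Icc a b, HasDerivAt f (α t + β t * |f t| ^ s) t)
    (hg : ∀ t ∈ Icc a b, HasDerivAt g (α t + β t * |g t| ^ s) t) (h : f a = g a) :
    EqOn f g (Icc a b) := by
  rcases lt_or_ge b a with hab | hab
  · simp [Icc_eq_empty_of_lt hab]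
  have hB : 0 ≤ B := (abs_nonneg _).trans (hβ a ⟨le_rfl, hab⟩)
  have cf : ContinuousOn f (Icc a b) := fun t ht => (hf t ht).continuousAt.continuousWithinAt
  have cg : ContinuousOn g (Icc a b) := fun t ht => (hg t ht).continuousAt.continuousWithinAt
  obtain ⟨R₁, hR₁⟩ := isCompact_Icc.exists_bound_of_continuousOn cf
  obtain ⟨R₂, hR₂⟩ := isCompact_Icc.exists_bound_of_continuousOn cg
  set R := max R₁ R₂
  have hR : 0 ≤ R := ((norm_nonneg _).trans (hR₁ a ⟨le_rfl, hab⟩)).trans (le_max_left _ _)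
  have hlip : ∀ t ∈ Ico a b, LipschitzOnWith (B * (s * R ^ (s - 1))).toNNReal
      (fun x => α t + β t * |x| ^ s) (Icc (-R) R) := by
    intro t ht
    refine LipschitzOnWith.of_dist_le_mul fun x hx y hy => ?_
    have h1 := Convex.norm_image_sub_le_of_norm_hasDerivWithin_le (f := fun x : ℝ => |x| ^ s)
      (f' := fun x => s * spow s x) (C := s * R ^ (s - 1)) (s := Icc (-R) R)
      (fun z _ => (hasDerivAt_abs_rpow' hs z).hasDerivWithinAt) (fun z hz => by
        rw [Real.norm_eq_abs, abs_mul, abs_spow hs, abs_of_pos (by linarith : 0 < s)]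
        refine mul_le_mul_of_nonneg_left ?_ (by linarith)
        exact Real.rpow_le_rpow (abs_nonneg _) (abs_le.2 hz) (by linarith)) (convex_Icc _ _) hy hx
    rw [Real.dist_eq, Real.dist_eq, Real.coe_toNNReal _ (by positivity),
      show α t + β t * |x| ^ s - (α t + β t * |y| ^ s) = β t * (|x| ^ s - |y| ^ s) by ring,
      abs_mul, mul_assoc B]
    exact mul_le_mul (hβ t ⟨ht.1, ht.2.le⟩) h1 (abs_nonneg _) hB
  refine ODE_solution_unique_of_mem_Icc_right (v := fun t x => α t + β t * |x| ^ s)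
    (s := fun _ => Icc (-R) R) hlip cf (fun t ht => (hf t ⟨ht.1, ht.2.le⟩).hasDerivWithinAt)
    (fun t ht => abs_le.1 ((hR₁ t ⟨ht.1, ht.2.le⟩).trans (le_max_left _ _))) cg
    (fun t ht => (hg t ⟨ht.1, ht.2.le⟩).hasDerivWithinAt)
    (fun t ht => abs_le.1 ((hR₂ t ⟨ht.1, ht.2.le⟩).trans (le_max_right _ _))) h

/-- `(y, yd)` solves the half-linear equation with coefficient `w` on `[0, 1]`. -/
def IsSol (p : ℝ) (w y yd : ℝ → ℝ) : Prop :=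
  ∀ x ∈ Icc (0 : ℝ) 1, HasDerivAt y (yd x) x ∧
    HasDerivAt (fun t => spow p (yd t)) (-(p - 1) * w x * spow p (y x)) x

/-- The conjugate exponent. -/
noncomputable def conj (p : ℝ) : ℝ := p / (p - 1)

lemma one_lt_conj {p : ℝ} (hp : 1 < p) : 1 < conj p := by
  rw [conj, lt_div_iff₀ (by linarith)]; linarith

lemma conj_mul {p : ℝ} (hp : 1 < p) : conj p * (p - 1) = p :=
  div_mul_cancel₀ _ (by linarith)

lemma conj_sub {p : ℝ} (hp : 1 < p) : (p - 1) * (conj p - 1) = 1 := by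
  linarith [conj_mul hp]

lemma abs_spow_rpow_conj {p : ℝ} (hp : 1 < p) (t : ℝ) : |spow p t| ^ conj p = |t| ^ p := by
  rw [abs_spow hp, ← Real.rpow_mul (abs_nonneg _), mul_comm, conj_mul hp]

lemma spow_injective {p : ℝ} (hp : 1 < p) : Function.Injective (spow p) :=
  Function.LeftInverse.injective (g := spow (conj p)) fun t => spow_spow hp (conj_sub hp) t

namespace IsSol

variable {p : ℝ} {w y yd u ud : ℝ → ℝ}

lemma hasDerivAt_energy (hp : 1 < p) (h : IsSol p w y yd) {x : ℝ} (hx : x ∈ Icc (0 : ℝ) 1) :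
    HasDerivAt (fun t => |y t| ^ p + |yd t| ^ p) (p * (1 - w x) * (spow p (y x) * yd x)) x := by
  have h1 := (hasDerivAt_abs_rpow' hp (y x)).comp x (h x hx).1
  have h2 := (hasDerivAt_abs_rpow' (one_lt_conj hp) (spow p (yd x))).comp x (h x hx).2
  have h3 := h1.add h2
  have h4 : (fun t => |y t| ^ p + |yd t| ^ p) =
      ((fun x => |x| ^ p) ∘ y + (fun x => |x| ^ conj p) ∘ fun t => spow p (yd t)) := by
    funext t; simp [abs_spow_rpow_conj hp]
  rw [h4]
  refine h3.congr_deriv ?_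
  rw [spow_spow hp (conj_sub hp)]
  linear_combination -(yd x * w x * spow p (y x)) * conj_mul hp

lemma abs_mul_le {p : ℝ} (hp : 1 < p) (a b : ℝ) : |spow p a * b| ≤ |a| ^ p + |b| ^ p := by
  have key : ∀ c : ℝ, 0 ≤ c → c ^ (p - 1) * c = c ^ p := by
    intro c hc
    rcases hc.eq_or_lt with rfl | hc
    · rw [Real.zero_rpow (by linarith : p ≠ 0)]; simp
    · rw [← Real.rpow_add_one hc.ne']; ring_nf
  rw [abs_mul, abs_spow hp]
  have ha := abs_nonneg a
  have hb := abs_nonneg b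
  have ha' := Real.rpow_nonneg ha p
  have hb' := Real.rpow_nonneg hb p
  rcases le_total |a| |b| with h | h
  · have := mul_le_mul_of_nonneg_right (Real.rpow_le_rpow ha h (by linarith : 0 ≤ p - 1)) hb
    rw [key _ hb] at this; linarith
  · have := mul_le_mul_of_nonneg_left h (Real.rpow_nonneg ha (p - 1))
    rw [key _ ha] at this; linarith

lemma energy_ne_zero (hp : 1 < p) (h : IsSol p w y yd) {W : ℝ}
    (hW : ∀ x ∈ Icc (0 : ℝ) 1, |w x| ≤ W) (hne : ∃ x ∈ Icc (0 : ℝ) 1, |y x| ^ p + |yd x| ^ p ≠ 0) :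
    ∀ x ∈ Icc (0 : ℝ) 1, |y x| ^ p + |yd x| ^ p ≠ 0 := by
  set e : ℝ → ℝ := fun t => |y t| ^ p + |yd t| ^ p with he
  set K := p * (1 + W)
  have hd : ∀ x ∈ Icc (0 : ℝ) 1, HasDerivAt e (p * (1 - w x) * (spow p (y x) * yd x)) x :=
    fun x hx => h.hasDerivAt_energy hp hx
  have he0 : ∀ x, 0 ≤ e x := fun x =>
    add_nonneg (Real.rpow_nonneg (abs_nonneg _) _) (Real.rpow_nonneg (abs_nonneg _) _)
  have hb : ∀ x ∈ Icc (0 : ℝ) 1, |p * (1 - w x) * (spow p (y x) * yd x)| ≤ K * e x := by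
    intro x hx
    rw [abs_mul, abs_mul, abs_of_pos (by linarith : 0 < p)]
    refine mul_le_mul (mul_le_mul_of_nonneg_left ?_ (by linarith)) (abs_mul_le hp _ _)
      (abs_nonneg _) ?_
    · refine (abs_sub _ _).trans ?_
      rw [abs_one]; linarith [hW x hx]
    · have := (abs_nonneg _).trans (hW x hx)
      positivity
  have hexp : ∀ (c x : ℝ), HasDerivAt (fun t => Real.exp (c * t)) (Real.exp (c * x) * c) x := by
    intro c x
    simpa using ((hasDerivAt_id x).const_mul c).exp
  have hd' : ∀ c, ∀ x ∈ Icc (0 : ℝ) 1, HasDerivAt (fun t => e t * Real.exp (c * t))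
      ((p * (1 - w x) * (spow p (y x) * yd x) + c * e x) * Real.exp (c * x)) x := by
    intro c x hx
    refine ((hd x hx).fun_mul (hexp c x)).congr_deriv ?_
    ring
  have hco : ∀ c, ContinuousOn (fun t => e t * Real.exp (c * t)) (Icc 0 1) := fun c x hx =>
    (hd' c x hx).continuousAt.continuousWithinAt
  have hmono : MonotoneOn (fun t => e t * Real.exp (K * t)) (Icc 0 1) := by
    refine monotoneOn_of_deriv_nonneg (convex_Icc _ _) (hco K) (fun x hx => ?_) fun x hx => ?_
    · exact (hd' K x (interior_subset hx)).differentiableAt.differentiableWithinAt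
    · rw [(hd' K x (interior_subset hx)).deriv]
      refine mul_nonneg ?_ (Real.exp_pos _).le
      linarith [(abs_le.1 (hb x (interior_subset hx))).1]
  have hanti : AntitoneOn (fun t => e t * Real.exp (-K * t)) (Icc 0 1) := by
    refine antitoneOn_of_deriv_nonpos (convex_Icc _ _) (hco (-K)) (fun x hx => ?_) fun x hx => ?_
    · exact (hd' (-K) x (interior_subset hx)).differentiableAt.differentiableWithinAt
    · rw [(hd' (-K) x (interior_subset hx)).deriv]
      refine mul_nonpos_of_nonpos_of_nonneg ?_ (Real.exp_pos _).le
      linarith [(abs_le.1 (hb x (interior_subset hx))).2]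
  intro x hx h0
  obtain ⟨t, ht, hne⟩ := hne
  change e x = 0 at h0
  have hpos : 0 < e t := lt_of_le_of_ne (he0 t) (Ne.symm hne)
  rcases le_total t x with hle | hle
  · have := hmono ht hx hle
    simp only [h0, zero_mul] at this
    exact absurd this (not_le.2 (mul_pos hpos (Real.exp_pos _)))
  · have := hanti hx ht hle
    simp only [h0, zero_mul] at this
    exact absurd this (not_le.2 (mul_pos hpos (Real.exp_pos _)))

lemma hasDerivAt_quot (hp : 1 < p) (h : IsSol p w y yd) {x : ℝ} (hx : x ∈ Icc (0 : ℝ) 1)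
    (hne : yd x ≠ 0) :
    HasDerivAt (fun t => y t / yd t) (1 + w x * |y x / yd x| ^ p) x := by
  have h1 := (hasDerivAt_spow (conj p) (spow_ne_zero (p := p) hne)).comp x (h x hx).2
  have h2 : (spow (conj p) ∘ fun t => spow p (yd t)) = yd := by
    funext t; exact spow_spow hp (conj_sub hp) _
  rw [h2] at h1
  refine ((h x hx).1.div h1 hne).congr_deriv ?_
  have hc := conj_sub hp
  have ha : 0 < |yd x| := abs_pos.2 hne
  have e1 : |spow p (yd x)| ^ (conj p - 2) = |yd x| ^ 2 / |yd x| ^ p := by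
    rw [abs_spow hp, ← Real.rpow_mul ha.le, ← Real.rpow_natCast |yd x| 2, ← Real.rpow_sub ha]
    congr 1; push_cast; linarith
  have hY : 0 < |yd x| ^ p := Real.rpow_pos_of_pos ha _
  rw [e1, abs_div, Real.div_rpow (abs_nonneg _) (abs_nonneg _), sq_abs,
    ← spow_mul_self (by linarith : p ≠ 0) (y x)]
  field_simp
  linear_combination y x * w x * spow p (y x) * hc

lemma hasDerivAt_quot' (hp : 1 < p) (h : IsSol p w y yd) {x : ℝ} (hx : x ∈ Icc (0 : ℝ) 1)
    (hne : y x ≠ 0) :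
    HasDerivAt (fun t => spow p (yd t) / spow p (y t))
      (-(p - 1) * w x + -(p - 1) * |spow p (yd x) / spow p (y x)| ^ conj p) x := by
  have h1 := (hasDerivAt_spow p hne).comp x (h x hx).1
  have hs := spow_ne_zero (p := p) hne
  refine ((h x hx).2.div h1 hs).congr_deriv ?_
  have ha : 0 < |y x| := abs_pos.2 hne
  have hY : 0 < |y x| ^ p := Real.rpow_pos_of_pos ha _
  have e1 : |y x| ^ (p - 2) * |y x| ^ p = (spow p (y x)) ^ 2 := by
    rw [← sq_abs, abs_spow hp, ← Real.rpow_natCast, ← Real.rpow_mul ha.le, ← Real.rpow_add ha]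
    congr 1; push_cast; ring
  rw [abs_div, Real.div_rpow (abs_nonneg _) (abs_nonneg _), abs_spow_rpow_conj hp,
    abs_spow_rpow_conj hp, ← spow_mul_self (by linarith : p ≠ 0) (yd x), Function.comp_apply]
  field_simp
  linear_combination -(p - 1) * spow p (yd x) * yd x * e1

end IsSol

namespace IsSol

variable {p : ℝ} {w y yd u ud : ℝ → ℝ}

lemma continuousAt_deriv (hp : 1 < p) (h : IsSol p w y yd) {x : ℝ} (hx : x ∈ Icc (0 : ℝ) 1) :
    ContinuousAt yd x := by
  have h2 : (spow (conj p) ∘ fun t => spow p (yd t)) = yd := by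
    funext t; exact spow_spow hp (conj_sub hp) _
  rw [← h2]
  exact ContinuousAt.comp (continuous_spow (one_lt_conj hp)).continuousAt (h x hx).2.continuousAt

lemma exists_Icc_of_eventually {P : ℝ → Prop} {x : ℝ} (hx : x < 1) (h : ∀ᶠ t in 𝓝 x, P t) :
    ∃ b, x < b ∧ b ≤ 1 ∧ ∀ t ∈ Icc x b, P t := by
  obtain ⟨ε, hε, h⟩ := Metric.eventually_nhds_iff.1 h
  refine ⟨min 1 (x + ε / 2), lt_min hx (by linarith), min_le_left _ _, fun t ht => h ?_⟩
  rw [Real.dist_eq, abs_lt]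
  have := ht.2.trans (min_le_right _ _)
  exact ⟨by linarith [ht.1], by linarith⟩

lemma cross_eq_zero (hp : 1 < p) (h : IsSol p w y yd) (h' : IsSol p w u ud) {W : ℝ}
    (hW : ∀ x ∈ Icc (0 : ℝ) 1, |w x| ≤ W)
    (he : ∀ x ∈ Icc (0 : ℝ) 1, |y x| ^ p + |yd x| ^ p ≠ 0)
    (he' : ∀ x ∈ Icc (0 : ℝ) 1, |u x| ^ p + |ud x| ^ p ≠ 0) (hy : y 0 = 0) (hu : u 0 = 0) :
    ∀ x ∈ Icc (0 : ℝ) 1, y x * ud x = yd x * u x := by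
  have hp0 : p ≠ 0 := by linarith
  have hz : |(0 : ℝ)| ^ p = 0 := by rw [abs_zero, Real.zero_rpow hp0]
  have hcl : IsClosed ({x | y x * ud x - yd x * u x = 0} ∩ Icc (0 : ℝ) 1) := by
    have hc : ContinuousOn (fun x => y x * ud x - yd x * u x) (Icc 0 1) := fun x hx =>
      (((h x hx).1.continuousAt.mul (h'.continuousAt_deriv hp hx)).sub
        ((h.continuousAt_deriv hp hx).mul (h' x hx).1.continuousAt)).continuousWithinAt
    have := hc.preimage_isClosed_of_isClosed isClosed_Icc (isClosed_singleton (x := (0 : ℝ)))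
    rwa [inter_comm] at this
  have key := hcl.Icc_subset_of_forall_mem_nhdsWithin (by simp [hy, hu]) fun x hx => ?_
  · exact fun x hx => sub_eq_zero.1 (key hx)
  obtain ⟨hxZ, hx0, hx1⟩ := hx
  have hxI : x ∈ Icc (0 : ℝ) 1 := ⟨hx0, hx1.le⟩
  have hxZ : y x * ud x = yd x * u x := sub_eq_zero.1 hxZ
  by_cases hyd : yd x = 0
  · have hy0 : y x ≠ 0 := by
      intro h0; exact he x hxI (by rw [h0, hyd, hz, add_zero])
    have hud : ud x = 0 := by
      rw [hyd, zero_mul] at hxZ; exact (mul_eq_zero.1 hxZ).resolve_left hy0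
    have hu0 : u x ≠ 0 := by
      intro h0; exact he' x hxI (by rw [h0, hud, hz, add_zero])
    obtain ⟨b, hb, hb1, hP⟩ := exists_Icc_of_eventually hx1
      (((h x hxI).1.continuousAt.eventually_ne hy0).and
        ((h' x hxI).1.continuousAt.eventually_ne hu0))
    have hI : ∀ t ∈ Icc x b, t ∈ Icc (0 : ℝ) 1 := fun t ht => ⟨hx0.trans ht.1, ht.2.trans hb1⟩
    have heq := riccati_unique (one_lt_conj hp) (a := x) (b := b) (B := p - 1)
      (fun t _ => by rw [abs_neg, abs_of_pos (by linarith)])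
      (fun t ht => h.hasDerivAt_quot' hp (hI t ht) (hP t ht).1)
      (fun t ht => h'.hasDerivAt_quot' hp (hI t ht) (hP t ht).2) (by simp [hyd, hud, spow_zero])
    refine mem_of_superset (Icc_mem_nhdsGT hb) fun t ht => ?_
    have := heq ht
    simp only at this
    rw [div_eq_div_iff (spow_ne_zero (hP t ht).1) (spow_ne_zero (hP t ht).2), ← spow_mul,
      ← spow_mul] at this
    exact sub_eq_zero.2 (by rw [spow_injective hp this]; ring)
  · have hud : ud x ≠ 0 := by
      intro h0
      rw [h0, mul_zero] at hxZ
      have hu0 := (mul_eq_zero.1 hxZ.symm).resolve_left hyd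
      exact he' x hxI (by rw [h0, hu0, hz, add_zero])
    obtain ⟨b, hb, hb1, hP⟩ := exists_Icc_of_eventually hx1
      (((h.continuousAt_deriv hp hxI).eventually_ne hyd).and
        ((h'.continuousAt_deriv hp hxI).eventually_ne hud))
    have hI : ∀ t ∈ Icc x b, t ∈ Icc (0 : ℝ) 1 := fun t ht => ⟨hx0.trans ht.1, ht.2.trans hb1⟩
    have heq := riccati_unique hp (a := x) (b := b) (B := W)
      (fun t ht => hW t (hI t ht))
      (fun t ht => h.hasDerivAt_quot hp (hI t ht) (hP t ht).1)
      (fun t ht => h'.hasDerivAt_quot hp (hI t ht) (hP t ht).2) (by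
        rw [div_eq_div_iff hyd hud, hxZ, mul_comm])
    refine mem_of_superset (Icc_mem_nhdsGT hb) fun t ht => ?_
    have := heq ht
    simp only at this
    rw [div_eq_div_iff (hP t ht).1 (hP t ht).2] at this
    exact sub_eq_zero.2 (by rw [this]; ring)

end IsSol

namespace PTrig

variable {p : ℝ} {T : PTrig p}

/-- Polar coordinates built from an angle solution give a solution of the half-linear equation. -/
lemma Angle.exists_isSol (hp : 1 < p) {z : ℝ} (hz : 0 < z) {w φ : ℝ → ℝ}
    (hφ : T.Angle z (fun x => w x / z ^ (p - 1) - z) φ) (hw : Continuous w) :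
    ∃ r : ℝ → ℝ, (∀ x, 0 < r x) ∧
      IsSol p w (fun x => r x * T.S (φ x)) (fun x => z * r x * T.C (φ x)) := by
  have cφ := hφ.continuous
  have cf := T.continuous_f hp
  have hzp : 0 < z ^ (p - 1) := Real.rpow_pos_of_pos hz _
  obtain ⟨κ, hκ⟩ : ∃ κ : ℝ → ℝ, ∀ x, w x / z ^ (p - 1) = κ x := ⟨_, fun _ => rfl⟩
  have cκ : Continuous κ := by
    rw [← funext hκ]; exact hw.div_const _
  simp only [hκ] at hφ
  set J : ℝ → ℝ := fun x => ∫ t in (0 : ℝ)..x, (z - κ t) * T.f (φ t) with hJ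
  have hJd : ∀ x, HasDerivAt J ((z - κ x) * T.f (φ x)) x := fun x =>
    (Continuous.integral_hasStrictDerivAt (by fun_prop) 0 x).hasDerivAt
  refine ⟨fun x => Real.exp (J x), fun x => Real.exp_pos _, fun x _ => ⟨?_, ?_⟩⟩
  · refine ((hJd x).exp.fun_mul ((T.deriv_S (φ x)).comp x (hφ x))).congr_deriv ?_
    have hF : T.F (φ x) = spow p (T.S (φ x)) * T.S (φ x) := (spow_mul_self (by linarith) _).symm
    simp only [f, hF, Function.comp_apply]
    ring
  · have e1 : ∀ t, Real.exp (J t) ^ (p - 1) = Real.exp ((p - 1) * J t) := by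
      intro t; rw [← Real.exp_mul, mul_comm]
    have e2 : (fun t => spow p (z * Real.exp (J t) * T.C (φ t))) =
        fun t => z ^ (p - 1) * (Real.exp ((p - 1) * J t) * spow p (T.C (φ t))) := by
      funext t
      rw [spow_mul, spow_mul, spow_of_pos hz, spow_of_pos (Real.exp_pos _), e1, mul_assoc]
    rw [e2]
    have hc := (T.deriv_C (φ x)).comp x (hφ x)
    refine ((((hJd x).const_mul (p - 1)).exp.fun_mul hc).const_mul (z ^ (p - 1))).congr_deriv ?_
    rw [spow_mul, spow_of_pos (Real.exp_pos _), e1]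
    have hC : spow p (T.C (φ x)) * T.C (φ x) = 1 - T.F (φ x) := by
      rw [spow_mul_self (by linarith), T.abs_C_rpow]
    have hw' : w x = κ x * z ^ (p - 1) := by rw [← hκ]; field_simp
    simp only [f, Function.comp_apply]
    rw [hw']
    linear_combination (z ^ (p - 1) * Real.exp ((p - 1) * J x) * (p - 1) * (z - κ x) *
      spow p (T.S (φ x))) * hC

end PTrig

namespace PTrig

variable {p : ℝ} {T : PTrig p}

lemma Angle.pos (hp : 1 < p) {a : ℝ} (ha : 0 < a) {k φ : ℝ → ℝ} (hk : Continuous k)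
    (h : T.Angle a k φ) (h0 : φ 0 = 0) {x : ℝ} (hx : 0 < x) : 0 < φ x := by
  have hz : T.Angle 0 (fun _ => 0) (fun _ => 0) := fun x => by
    simpa using hasDerivAt_const x (0 : ℝ)
  refine hz.lt_of_lt hp continuous_const hk h (by rw [h0]) hx.le (fun t _ => ?_)
    (Or.inr ⟨0, ⟨le_rfl, hx.le⟩, hx, ?_⟩)
  · rw [T.F_zero hp]; linarith
  · rw [T.F_zero hp]; linarith

lemma isDirichletEigenvalue_of_angle (hp : 1 < p) {z : ℝ} (hz : 0 < z) {q qt φ : ℝ → ℝ}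
    (hqt : Continuous qt) (hq : ∀ x ∈ Icc (0 : ℝ) 1, qt x = q x) {lam : ℝ}
    (hφ : T.Angle z (fun x => (lam - qt x) / z ^ (p - 1) - z) φ) (h0 : φ 0 = 0) {k : ℕ}
    (hk : 1 ≤ k) (h1 : φ 1 = k * T.P) : IsDirichletEigenvalue p q 0 1 lam := by
  obtain ⟨r, hr, hs⟩ := hφ.exists_isSol hp hz (by fun_prop)
  refine ⟨_, _, ?_, fun x hx => (hs x hx).1, fun x hx => ?_, ?_, ?_⟩
  · have hP := T.P_pos
    have hk' : (1 : ℝ) ≤ k := by exact_mod_cast hk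
    obtain ⟨x, hx, hxP⟩ := intermediate_value_Icc zero_le_one hφ.continuous.continuousOn
      (show T.P / 2 ∈ Icc (φ 0) (φ 1) by
        rw [h0, h1]; exact ⟨by linarith, by nlinarith⟩)
    refine ⟨x, hx, mul_ne_zero (hr x).ne' ?_⟩
    rw [hxP]
    exact (T.S_pos _ (by linarith) (by linarith)).ne'
  · have := (hs x hx).2
    rw [← hq x hx]
    exact this
  · simp [h0, T.S_zero]
  · have := T.S_int k
    push_cast at this
    simp [h1, this]

lemma exists_nat_of_isDirichletEigenvalue (hp : 1 < p) {z : ℝ} (hz : 0 < z) {q qt φ : ℝ → ℝ}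
    (hqt : Continuous qt) (hq : ∀ x ∈ Icc (0 : ℝ) 1, qt x = q x) {lam : ℝ}
    (hφ : T.Angle z (fun x => (lam - qt x) / z ^ (p - 1) - z) φ) (h0 : φ 0 = 0)
    (he : IsDirichletEigenvalue p q 0 1 lam) : ∃ k : ℕ, 1 ≤ k ∧ φ 1 = k * T.P := by
  have hp0 : p ≠ 0 := by linarith
  obtain ⟨r, hr, hs⟩ := hφ.exists_isSol hp hz (by fun_prop)
  obtain ⟨y, yd, ⟨x₀, hx₀, hne⟩, hy, hyd, hy0, hy1⟩ := he
  have hsol : IsSol p (fun x => lam - qt x) y yd := fun x hx => ⟨hy x hx, by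
    have := hyd x hx
    rw [← hq x hx] at this
    exact this⟩
  have cw : Continuous fun x => lam - qt x := by fun_prop
  obtain ⟨W, hW⟩ := (isCompact_Icc (a := (0 : ℝ)) (b := 1)).exists_bound_of_continuousOn
    cw.continuousOn
  have hnn : ∀ a : ℝ, 0 ≤ |a| ^ p := fun a => Real.rpow_nonneg (abs_nonneg a) p
  have hpos : ∀ a : ℝ, a ≠ 0 → 0 < |a| ^ p := fun a ha => Real.rpow_pos_of_pos (abs_pos.2 ha) p
  have e1 := hsol.energy_ne_zero hp hW
    ⟨x₀, hx₀, (add_pos_of_pos_of_nonneg (hpos _ hne) (hnn _)).ne'⟩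
  have hC0 : T.C 0 ≠ 0 := (T.C_pos 0 le_rfl (by linarith [T.P_pos])).ne'
  have e2 := hs.energy_ne_zero hp hW ⟨0, ⟨le_rfl, zero_le_one⟩,
    (add_pos_of_nonneg_of_pos (hnn _) (hpos _ (by
      rw [h0]; exact mul_ne_zero (mul_pos hz (hr 0)).ne' hC0))).ne'⟩
  have hcr := hsol.cross_eq_zero hp hs hW e1 e2 hy0 (by simp [h0, T.S_zero]) 1
    ⟨zero_le_one, le_rfl⟩
  have hyd1 : yd 1 ≠ 0 := by
    intro h
    apply e1 1 ⟨zero_le_one, le_rfl⟩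
    rw [hy1, h, abs_zero, Real.zero_rpow hp0, add_zero]
  rw [hy1, zero_mul] at hcr
  have hS := (mul_eq_zero.1 ((mul_eq_zero.1 hcr.symm).resolve_left hyd1)).resolve_left (hr 1).ne'
  obtain ⟨k, hk⟩ := T.eq_int_of_S_eq_zero hS
  have hφ1 := hφ.pos hp hz (by fun_prop) h0 one_pos
  rw [hk] at hφ1
  have hk0 : (0 : ℝ) < k := pos_of_mul_pos_left hφ1 T.P_pos.le
  have hk1 : 0 < k := by exact_mod_cast hk0
  lift k to ℕ using hk1.le
  exact ⟨k, by exact_mod_cast hk1, by exact_mod_cast hk⟩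

end PTrig

lemma eq_of_continuous_of_forall_nat {g : ℝ → ℝ} (hg : Continuous g)
    (h : ∀ s, ∃ k : ℕ, g s = k) (a b : ℝ) : g a = g b := by
  obtain ⟨j, hj⟩ := h a
  obtain ⟨l, hl⟩ := h b
  rw [hj, hl]
  by_contra hne
  have hsub := intermediate_value_uIcc (hg.continuousOn (s := uIcc a b))
  have hmem : ((min j l : ℕ) : ℝ) + 1 / 2 ∈ uIcc (g a) (g b) := by
    rw [hj, hl, mem_uIcc]
    have hne' : j ≠ l := fun h => hne (by rw [h])
    rcases lt_or_gt_of_ne hne' with h | h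
    · left
      rw [min_eq_left h.le]
      have : (j : ℝ) + 1 ≤ l := by exact_mod_cast h
      constructor <;> linarith
    · right
      rw [min_eq_right h.le]
      have : (l : ℝ) + 1 ≤ j := by exact_mod_cast h
      constructor <;> linarith
  obtain ⟨s, -, hs⟩ := hsub hmem
  obtain ⟨k, hk⟩ := h s
  rw [hk] at hs
  have h2 : ((2 * k : ℕ) : ℝ) = ((2 * min j l + 1 : ℕ) : ℝ) := by push_cast at hs ⊢; linarith
  have h3 := Nat.cast_injective h2
  omega

lemma eq_self_of_strictMonoOn {a : ℕ → ℕ} (ha : ∀ i j, 1 ≤ i → i < j → a i < a j)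
    (h1 : ∀ n, 1 ≤ n → 1 ≤ a n)
    (hd : ∀ n, 1 ≤ n → n < a n → ∃ i, 1 ≤ i ∧ a i = n) {n : ℕ} (hn : 1 ≤ n) : a n = n := by
  induction n using Nat.strong_induction_on with
  | _ n ih =>
    have hge : n ≤ a n := by
      rcases hn.eq_or_lt with rfl | h
      · exact h1 1 le_rfl
      · have h2 := ih (n - 1) (by omega) (by omega)
        have h3 := ha (n - 1) n (by omega) (by omega)
        omega
    by_contra hne
    obtain ⟨i, hi, hin⟩ := hd n hn (lt_of_le_of_ne hge (Ne.symm hne))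
    rcases lt_trichotomy i n with h | rfl | h
    · have := ih i h hi
      omega
    · exact hne hin
    · have := ha n i hn h
      omega

namespace PTrig

variable {p : ℝ} {T : PTrig p}

lemma Angle.exists_F_pos (hp : 1 < p) {a : ℝ} (ha : 0 < a) {k φ : ℝ → ℝ} (hk : Continuous k)
    (h : T.Angle a k φ) (h0 : φ 0 = 0) : ∃ t ∈ Icc (0 : ℝ) 1, 0 < T.F (φ t) := by
  have h1 := h.pos hp ha hk h0 one_pos
  have hP := T.P_pos
  obtain ⟨x, hx, hxP⟩ := intermediate_value_Icc zero_le_one h.continuous.continuousOn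
    (show min (φ 1) (T.P / 2) ∈ Icc (φ 0) (φ 1) by
      rw [h0]; exact ⟨le_min h1.le (by linarith), min_le_left _ _⟩)
  refine ⟨x, hx, ?_⟩
  rw [hxP]
  exact T.F_pos (lt_min h1 (by linarith)) (by linarith [min_le_right (φ 1) (T.P / 2)])

lemma angle_eq_of_eigenvalue_one (hp : 1 < p) {q qt : ℝ → ℝ} (hqt : Continuous qt)
    (hq : ∀ x ∈ Icc (0 : ℝ) 1, qt x = q x) {B : ℝ} (hB : ∀ x, |qt x| ≤ B) {Λ : ℕ → ℝ}
    (hΛ : StrictMonoOn Λ {n | 1 ≤ n})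
    (hEig : ∀ n : ℕ, 1 ≤ n → IsDirichletEigenvalue p q 0 1 (Λ n))
    (hAll : ∀ μ : ℝ, IsDirichletEigenvalue p q 0 1 μ → ∃ n : ℕ, 1 ≤ n ∧ μ = Λ n)
    {n : ℕ} (hn : 1 ≤ n) :
    ∃ φ : ℝ → ℝ, φ 0 = 0 ∧ T.Angle 1 (fun x => (Λ n - 1) + -1 * qt x) φ ∧ φ 1 = n * T.P := by
  have hP := T.P_pos
  have hex : ∀ s : ℝ, ∃ φ : ℝ → ℝ, φ 0 = 0 ∧ T.Angle 1 (fun x => (s - 1) + -1 * qt x) φ := by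
    intro s
    refine exists_angle hp 1 (by fun_prop) (K := |s - 1| + B) fun x => ?_
    refine (abs_add_le _ _).trans ?_
    rw [neg_one_mul, abs_neg]
    linarith [hB x]
  choose ψ h0 hψ using hex
  have cψ : Continuous fun z : ℝ × ℝ => ψ z.1 z.2 :=
    continuous_angle_family hp (a := fun _ => 1) (c₀ := fun s => s - 1) (c₁ := fun _ => -1)
      continuous_const (by fun_prop) continuous_const hqt hB h0 hψ
  have cθ : Continuous fun s => ψ s 1 := cψ.comp (by fun_prop : Continuous fun s : ℝ => (s, (1 : ℝ)))
  have hk : ∀ s : ℝ, Continuous fun x => (s - 1) + -1 * qt x := fun s => by fun_prop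
  have hmono : StrictMono fun s => ψ s 1 := by
    intro s t hst
    obtain ⟨x, hx, hF⟩ := (hψ s).exists_F_pos hp one_pos (hk s) (h0 s)
    refine (hψ s).lt_of_lt hp (hk s) (hk t) (hψ t) (by rw [h0, h0]) zero_le_one
      (fun r _ => ?_) (Or.inr ⟨x, hx, one_pos, ?_⟩)
    · have := mul_nonneg (sub_pos.2 hst).le (T.F_nonneg (ψ s r))
      linarith
    · have := mul_pos (sub_pos.2 hst) hF
      linarith
  have hz : ∀ s, T.Angle 1 (fun x => (s - qt x) / 1 ^ (p - 1) - 1) (ψ s) := by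
    intro s x
    refine (hψ s x).congr_deriv ?_
    simp only [Real.one_rpow]; ring
  have hlow : ψ (-B) 1 < T.P := by
    have hc : T.Angle 1 (fun _ => -1) (fun _ => T.P / 2) := fun x => by
      rw [T.F_half hp]
      simpa using hasDerivAt_const x (T.P / 2)
    have := (hψ (-B)).lt_of_lt hp (hk _) continuous_const hc (by rw [h0]; linarith) zero_le_one
      (fun r _ => by
        have h1 : 0 ≤ -1 - ((-B - 1) + -1 * qt r) := by linarith [neg_abs_le (qt r), hB r]
        have := mul_nonneg h1 (T.F_nonneg (ψ (-B) r))
        linarith) (Or.inl (by rw [h0]; linarith))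
    linarith
  have hnat : ∀ i : ℕ, ∃ k : ℕ, 1 ≤ i → 1 ≤ k ∧ ψ (Λ i) 1 = k * T.P := by
    intro i
    by_cases hi : 1 ≤ i
    · obtain ⟨k, hk⟩ := exists_nat_of_isDirichletEigenvalue hp one_pos hqt hq (hz (Λ i)) (h0 _)
        (hEig i hi)
      exact ⟨k, fun _ => hk⟩
    · exact ⟨0, fun h => absurd h hi⟩
  choose a ha using hnat
  have han : a n = n := by
    refine eq_self_of_strictMonoOn (fun i j hi hij => ?_) (fun i hi => (ha i hi).1)
      (fun j hj hlt => ?_) hn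
    · have := hmono (hΛ hi (hi.trans hij.le) hij)
      simp only [(ha i hi).2, (ha j (hi.trans hij.le)).2] at this
      exact_mod_cast lt_of_mul_lt_mul_right this hP.le
    · have h1 := (ha j hj).2
      have hj' : (1 : ℝ) ≤ j := by exact_mod_cast hj
      have hlt' : (j : ℝ) ≤ a j := by exact_mod_cast hlt.le
      have hle : -B ≤ Λ j := by
        by_contra! hcon
        have := hmono hcon
        simp only [h1] at this
        nlinarith
      obtain ⟨s, -, hs⟩ := intermediate_value_Icc hle cθ.continuousOn
        (show (j : ℝ) * T.P ∈ Icc (ψ (-B) 1) (ψ (Λ j) 1) by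
          rw [h1]; exact ⟨by nlinarith, by nlinarith⟩)
      obtain ⟨i, hi, rfl⟩ := hAll s
        (isDirichletEigenvalue_of_angle hp one_pos hqt hq (hz s) (h0 s) hj hs)
      refine ⟨i, hi, ?_⟩
      have h2 := (ha i hi).2
      simp only [hs] at h2
      exact_mod_cast (mul_right_cancel₀ hP.ne' h2).symm
  refine ⟨ψ (Λ n), h0 _, hψ _, ?_⟩
  rw [(ha n hn).2, han]

lemma angle_eq_of_eigenvalue (hp : 1 < p) {q qt : ℝ → ℝ} (hqt : Continuous qt)
    (hq : ∀ x ∈ Icc (0 : ℝ) 1, qt x = q x) {B : ℝ} (hB : ∀ x, |qt x| ≤ B) {Λ : ℕ → ℝ}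
    (hΛ : StrictMonoOn Λ {n | 1 ≤ n})
    (hEig : ∀ n : ℕ, 1 ≤ n → IsDirichletEigenvalue p q 0 1 (Λ n))
    (hAll : ∀ μ : ℝ, IsDirichletEigenvalue p q 0 1 μ → ∃ n : ℕ, 1 ≤ n ∧ μ = Λ n)
    {n : ℕ} (hn : 1 ≤ n) {s : ℝ} {φ : ℝ → ℝ} (h0 : φ 0 = 0)
    (hφ : T.Angle (Real.exp s) (fun x => (Λ n * Real.exp (-(p - 1) * s) - Real.exp s) +
      -Real.exp (-(p - 1) * s) * qt x) φ) : φ 1 = n * T.P := by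
  have hP := T.P_pos
  have hk : ∀ s : ℝ, Continuous fun x => (Λ n * Real.exp (-(p - 1) * s) - Real.exp s) +
      -Real.exp (-(p - 1) * s) * qt x := fun s => by fun_prop
  have hex : ∀ s : ℝ, ∃ φ : ℝ → ℝ, φ 0 = 0 ∧ T.Angle (Real.exp s)
      (fun x => (Λ n * Real.exp (-(p - 1) * s) - Real.exp s) +
      -Real.exp (-(p - 1) * s) * qt x) φ := by
    intro s
    refine exists_angle hp _ (hk s) (K := |Λ n * Real.exp (-(p - 1) * s) - Real.exp s| +
      Real.exp (-(p - 1) * s) * B) fun x => ?_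
    refine (abs_add_le _ _).trans (add_le_add le_rfl ?_)
    rw [abs_mul, abs_neg, abs_of_pos (Real.exp_pos _)]
    exact mul_le_mul_of_nonneg_left (hB x) (Real.exp_pos _).le
  choose Φ hΦ0 hΦ using hex
  have cΦ : Continuous fun z : ℝ × ℝ => Φ z.1 z.2 :=
    continuous_angle_family hp (a := fun s => Real.exp s)
      (c₀ := fun s => Λ n * Real.exp (-(p - 1) * s) - Real.exp s)
      (c₁ := fun s => -Real.exp (-(p - 1) * s))
      (by fun_prop) (by fun_prop) (by fun_prop) hqt hB hΦ0 hΦ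
  have cθ : Continuous fun s => Φ s 1 / T.P :=
    (cΦ.comp (by fun_prop : Continuous fun s : ℝ => (s, (1 : ℝ)))).div_const _
  have hz : ∀ s, T.Angle (Real.exp s)
      (fun x => (Λ n - qt x) / Real.exp s ^ (p - 1) - Real.exp s) (Φ s) := by
    intro s x
    refine (hΦ s x).congr_deriv ?_
    simp only
    rw [← Real.exp_mul, div_eq_mul_inv, ← Real.exp_neg, show -(s * (p - 1)) = -(p - 1) * s by ring]
    ring
  have hconst := eq_of_continuous_of_forall_nat cθ (fun s => by
    obtain ⟨k, -, hk⟩ := exists_nat_of_isDirichletEigenvalue hp (Real.exp_pos s) hqt hq (hz s)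
      (hΦ0 s) (hEig n hn)
    exact ⟨k, by rw [hk, mul_div_cancel_right₀ _ hP.ne']⟩) s 0
  obtain ⟨ψ, hψ0, hψ, hψ1⟩ := angle_eq_of_eigenvalue_one (T := T) hp hqt hq hB hΛ hEig hAll hn
  have e1 : φ 1 = Φ s 1 := hφ.eqOn hp (hk s) (hk s) (hΦ s) (by rw [h0, hΦ0]) (c := 1)
    (fun _ _ => rfl) ⟨zero_le_one, le_rfl⟩
  have hΦz : T.Angle 1 (fun x => (Λ n - 1) + -1 * qt x) (Φ 0) := by
    have := hΦ 0
    simpa using this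
  have e2 : Φ 0 1 = ψ 1 := hΦz.eqOn hp (by fun_prop) (by fun_prop) hψ (by rw [hψ0, hΦ0]) (c := 1)
    (fun _ _ => rfl) ⟨zero_le_one, le_rfl⟩
  rw [div_left_inj' hP.ne', e2, hψ1] at hconst
  rw [e1, hconst]

end PTrig

lemma le_of_hasDerivAt_nonneg {f f' : ℝ → ℝ} {a b : ℝ} (h : ∀ x, HasDerivAt f (f' x) x)
    (h' : ∀ x ∈ Icc a b, 0 ≤ f' x) (hab : a ≤ b) : f a ≤ f b := by
  have hm : MonotoneOn f (Icc a b) := by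
    refine monotoneOn_of_deriv_nonneg (convex_Icc _ _)
      (fun x _ => (h x).continuousAt.continuousWithinAt)
      (fun x _ => (h x).differentiableAt.differentiableWithinAt) fun x hx => ?_
    rw [(h x).deriv]
    exact h' x (interior_subset hx)
  exact hm ⟨le_rfl, hab⟩ ⟨hab, le_rfl⟩ hab

namespace PTrig

variable {p : ℝ} (T : PTrig p) (W : ℝ → ℝ)

/-- The logarithmic weight associated with a perturbation `W`, as a function of the angle. -/
noncomputable def logWeight (u : ℝ) : ℝ :=
  ∫ t in (0 : ℝ)..u, W t * (p * T.f t) / (1 + W t * T.F t)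

/-- The integrand of the angular derivative with respect to scaling. -/
noncomputable def scaleDensity (u : ℝ) : ℝ :=
  Real.exp (-T.logWeight W u) * W u / (1 + W u * T.F u) * (T.F u - u * T.f u)

variable {W}

lemma one_add_pos (h0 : ∀ u, 0 ≤ W u) (u : ℝ) : 0 < 1 + W u * T.F u := by
  have := mul_nonneg (h0 u) (T.F_nonneg u)
  linarith

lemma continuous_logDensity (hp : 1 < p) (hW : Continuous W) (h0 : ∀ u, 0 ≤ W u) :
    Continuous fun t => W t * (p * T.f t) / (1 + W t * T.F t) := by
  have := T.continuous_f hp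
  have := T.continuous_F hp
  exact Continuous.div (by fun_prop) (by fun_prop) fun u => (T.one_add_pos h0 u).ne'

lemma hasDerivAt_logWeight (hp : 1 < p) (hW : Continuous W) (h0 : ∀ u, 0 ≤ W u) (u : ℝ) :
    HasDerivAt (T.logWeight W) (W u * (p * T.f u) / (1 + W u * T.F u)) u :=
  ((T.continuous_logDensity hp hW h0).integral_hasStrictDerivAt 0 u).hasDerivAt

lemma continuous_scaleDensity (hp : 1 < p) (hW : Continuous W) (h0 : ∀ u, 0 ≤ W u) :
    Continuous (T.scaleDensity W) := by
  have h1 := T.continuous_f hp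
  have h2 := T.continuous_F hp
  have h3 : Continuous (T.logWeight W) :=
    continuous_iff_continuousAt.2 fun u => (T.hasDerivAt_logWeight hp hW h0 u).continuousAt
  unfold scaleDensity
  exact (Continuous.div (by fun_prop) (by fun_prop) fun u => (T.one_add_pos h0 u).ne').mul
    (by fun_prop)

lemma hasDerivAt_reflect {G : ℝ → ℝ} {G' : ℝ → ℝ} (h : ∀ x, HasDerivAt G (G' x) x) (c t : ℝ) :
    HasDerivAt (fun t => G (c + t) - G (c - t)) (G' (c + t) + G' (c - t)) t := by
  have h1 := (h (c + t)).comp t ((hasDerivAt_id t).const_add c)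
  have h2 := (h (c - t)).comp t ((hasDerivAt_id t).const_sub c)
  refine (h1.sub h2).congr_deriv ?_
  ring

lemma div_one_add_mono {a b F : ℝ} (ha : 0 ≤ a) (hab : a ≤ b) (hF : 0 ≤ F) :
    a / (1 + a * F) ≤ b / (1 + b * F) := by
  have := mul_nonneg ha hF
  have := mul_nonneg (ha.trans hab) hF
  rw [div_le_div_iff₀ (by linarith) (by linarith)]
  nlinarith

lemma logWeight_reflect (hp : 1 < p) (hW : Continuous W) (h0 : ∀ u, 0 ≤ W u) (hanti : Antitone W)
    (k : ℕ) {τ : ℝ} (hτ : 0 ≤ τ) (hτ' : τ ≤ T.P / 2) :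
    Real.log (1 + W (k * T.P + τ) * T.F τ) - Real.log (1 + W (k * T.P - τ) * T.F τ) ≤
      T.logWeight W (k * T.P + τ) - T.logWeight W (k * T.P - τ) := by
  have hlog : ∀ c, 0 ≤ c → ∀ t, HasDerivAt (fun t => Real.log (1 + c * T.F t))
      (c * (p * T.f t) / (1 + c * T.F t)) t := by
    intro c hc t
    have := mul_nonneg hc (T.F_nonneg t)
    exact (((T.hasDerivAt_F hp t).const_mul c).const_add 1).log (by linarith)
  set w₁ := W (k * T.P - τ) with hw₁
  set w₂ := W (k * T.P + τ) with hw₂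
  have h := le_of_hasDerivAt_nonneg (a := 0) (b := τ) (fun t =>
    ((hasDerivAt_reflect (T.hasDerivAt_logWeight hp hW h0) (k * T.P) t).fun_sub
      (hlog w₂ (h0 _) t)).fun_add (hlog w₁ (h0 _) t)) (fun t ht => ?_) hτ
  · simp only [T.F_zero hp, mul_zero, add_zero, sub_zero, Real.log_one, sub_self] at h
    linarith
  · rw [add_comm (k * T.P : ℝ) t, T.F_add_nat, T.f_add_nat, T.F_sub_nat, T.f_sub_nat]
    have hf : 0 ≤ p * T.f t := mul_nonneg (by linarith) (T.f_nonneg ht.1 (ht.2.trans hτ'))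
    have hF := T.F_nonneg t
    have i1 : W (k * T.P - t) / (1 + W (k * T.P - t) * T.F t) ≤ w₁ / (1 + w₁ * T.F t) :=
      div_one_add_mono (h0 _) (hanti (by linarith [ht.2])) hF
    have i2 : w₂ / (1 + w₂ * T.F t) ≤ W (t + k * T.P) / (1 + W (t + k * T.P) * T.F t) :=
      div_one_add_mono (h0 _) (hanti (by linarith [ht.2])) hF
    have j1 := mul_le_mul_of_nonneg_right i1 hf
    have j2 := mul_le_mul_of_nonneg_right i2 hf
    simp only [mul_neg, neg_div, div_mul_eq_mul_div] at j1 j2 ⊢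
    linarith

lemma scaleDensity_reflect (hp : 1 < p) (hW : Continuous W) (h0 : ∀ u, 0 ≤ W u)
    (h1 : ∀ u, W u ≤ 1) (hanti : Antitone W) {k : ℕ} (hk : 1 ≤ k) {τ : ℝ} (hτ : 0 ≤ τ)
    (hτ' : τ ≤ T.P / 2) :
    0 ≤ T.scaleDensity W (k * T.P - τ) ∧
      0 ≤ T.scaleDensity W (k * T.P + τ) + T.scaleDensity W (k * T.P - τ) := by
  have hP := T.P_pos
  have hk' : (1 : ℝ) ≤ k := by exact_mod_cast hk
  have hlog := T.logWeight_reflect hp hW h0 hanti k hτ hτ'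
  have hF := T.F_nonneg τ
  have hF1 := T.F_le_one τ
  have hf := T.f_nonneg hτ hτ'
  have hg := T.mul_f_le_F hp hτ hτ'
  have e1 : T.F (k * T.P + τ) = T.F τ := by rw [add_comm, T.F_add_nat]
  have e2 : T.f (k * T.P + τ) = T.f τ := by rw [add_comm, T.f_add_nat]
  unfold scaleDensity
  rw [e1, e2, T.F_sub_nat, T.f_sub_nat]
  have ha₁ := h0 (k * T.P - τ)
  have ha₂ := h0 (k * T.P + τ)
  have hb₁ := h1 (k * T.P - τ)
  have hb₂ := h1 (k * T.P + τ)
  have hab : W (k * T.P + τ) ≤ W (k * T.P - τ) := hanti (by linarith)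
  set w₁ := W (k * T.P - τ)
  set w₂ := W (k * T.P + τ)
  set l₁ := T.logWeight W (k * T.P - τ)
  set l₂ := T.logWeight W (k * T.P + τ)
  set F := T.F τ
  set f := T.f τ
  have hp₁ : 0 < 1 + w₁ * F := by have := mul_nonneg ha₁ hF; linarith
  have hp₂ : 0 < 1 + w₂ * F := by have := mul_nonneg ha₂ hF; linarith
  have hV₁ : 0 ≤ Real.exp (-l₁) * w₁ / (1 + w₁ * F) := by positivity
  have hV₂ : 0 ≤ Real.exp (-l₂) * w₂ / (1 + w₂ * F) := by positivity
  have hg₁ : 0 ≤ F - (k * T.P - τ) * -f := by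
    have : 0 ≤ (k * T.P - τ) * f := mul_nonneg (by nlinarith) hf
    linarith
  have hV : Real.exp (-l₂) * w₂ / (1 + w₂ * F) ≤ Real.exp (-l₁) * w₁ / (1 + w₁ * F) := by
    have he : Real.exp (-l₂) ≤ Real.exp (-l₁) * ((1 + w₁ * F) / (1 + w₂ * F)) := by
      rw [← Real.exp_log (div_pos hp₁ hp₂), ← Real.exp_add, Real.log_div hp₁.ne' hp₂.ne']
      exact Real.exp_le_exp.2 (by linarith)
    have hw : (1 + w₁ * F) / (1 + w₂ * F) * (w₂ / (1 + w₂ * F)) ≤ w₁ / (1 + w₁ * F) := by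
      rw [div_mul_div_comm, div_le_div_iff₀ (by positivity) hp₁]
      have h3 : 0 ≤ 1 - F * F * (w₁ * w₂) := by
        have : F * F * (w₁ * w₂) ≤ 1 * 1 * (1 * 1) := by gcongr
        linarith
      nlinarith [mul_nonneg (sub_nonneg.2 hab) h3]
    calc Real.exp (-l₂) * w₂ / (1 + w₂ * F) = Real.exp (-l₂) * (w₂ / (1 + w₂ * F)) := by ring
      _ ≤ Real.exp (-l₁) * ((1 + w₁ * F) / (1 + w₂ * F)) * (w₂ / (1 + w₂ * F)) := by gcongr
      _ = Real.exp (-l₁) * ((1 + w₁ * F) / (1 + w₂ * F) * (w₂ / (1 + w₂ * F))) := by ring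
      _ ≤ Real.exp (-l₁) * (w₁ / (1 + w₁ * F)) := by gcongr
      _ = _ := by ring
  refine ⟨mul_nonneg hV₁ hg₁, ?_⟩
  have j1 := mul_nonneg (sub_nonneg.2 hV) hg₁
  have j2 := mul_nonneg hV₂ (sub_nonneg.2 hg)
  linarith

/-- The primitive of `scaleDensity` dominates its value on the first quarter period. -/
lemma integral_scaleDensity_ge (hp : 1 < p) (hW : Continuous W) (h0 : ∀ u, 0 ≤ W u)
    (h1 : ∀ u, W u ≤ 1) (hanti : Antitone W) {x : ℝ} (hx : T.P / 2 ≤ x) :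
    ∫ u in (0 : ℝ)..(T.P / 2), T.scaleDensity W u ≤ ∫ u in (0 : ℝ)..x, T.scaleDensity W u := by
  have hP := T.P_pos
  set J : ℝ → ℝ := fun x => ∫ u in (0 : ℝ)..x, T.scaleDensity W u with hJ
  have hJd : ∀ x, HasDerivAt J (T.scaleDensity W x) x := fun x =>
    ((T.continuous_scaleDensity hp hW h0).integral_hasStrictDerivAt 0 x).hasDerivAt
  have hsym : ∀ k : ℕ, 1 ≤ k → ∀ σ, 0 ≤ σ → σ ≤ T.P / 2 → J (k * T.P - σ) ≤ J (k * T.P + σ) := by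
    intro k hk σ h hσ
    have := le_of_hasDerivAt_nonneg (a := 0) (b := σ) (hasDerivAt_reflect hJd (k * T.P))
      (fun t ht => (T.scaleDensity_reflect hp hW h0 h1 hanti hk ht.1 (ht.2.trans hσ)).2) h
    simp only [add_zero, sub_zero, sub_self] at this
    linarith
  have hleft : ∀ k : ℕ, 1 ≤ k → ∀ y, k * T.P - T.P / 2 ≤ y → y ≤ k * T.P →
      J (k * T.P - T.P / 2) ≤ J y := by
    intro k hk y hy hy'
    refine le_of_hasDerivAt_nonneg hJd (fun t ht => ?_) hy
    have := (T.scaleDensity_reflect hp hW h0 h1 hanti hk (τ := k * T.P - t)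
      (by linarith [ht.2]) (by linarith [ht.1])).1
    rwa [sub_sub_cancel] at this
  have hcell : ∀ k : ℕ, 1 ≤ k → ∀ y, k * T.P - T.P / 2 ≤ y → y ≤ k * T.P + T.P / 2 →
      J (k * T.P - T.P / 2) ≤ J y := by
    intro k hk y hy hy'
    rcases le_total y (k * T.P) with h | h
    · exact hleft k hk y hy h
    · have := hsym k hk (y - k * T.P) (by linarith) (by linarith)
      rw [add_sub_cancel] at this
      exact (hleft k hk _ (by linarith) (by linarith)).trans this
  have hind : ∀ k : ℕ, J (T.P / 2) ≤ J (k * T.P + T.P / 2) := by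
    intro k
    induction k with
    | zero => simp
    | succ k ih =>
      refine ih.trans ?_
      have := hcell (k + 1) (by omega) (((k + 1 : ℕ) : ℝ) * T.P + T.P / 2) (by linarith) le_rfl
      have e : ((k + 1 : ℕ) : ℝ) * T.P - T.P / 2 = k * T.P + T.P / 2 := by push_cast; ring
      rwa [e] at this
  have hy : 0 ≤ (x - T.P / 2) / T.P := div_nonneg (by linarith) hP.le
  have i1 := (le_div_iff₀ hP).1 (Nat.floor_le hy)
  have i2 := (div_lt_iff₀ hP).1 (Nat.lt_floor_add_one ((x - T.P / 2) / T.P))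
  set k := ⌊(x - T.P / 2) / T.P⌋₊
  refine (hind k).trans ?_
  have := hcell (k + 1) (by omega) x (by push_cast; linarith) (by push_cast; linarith)
  have e : ((k + 1 : ℕ) : ℝ) * T.P - T.P / 2 = k * T.P + T.P / 2 := by push_cast; ring
  rwa [e] at this

lemma scaleDensity_nonneg (hp : 1 < p) (h0 : ∀ u, 0 ≤ W u) {u : ℝ} (hu : 0 ≤ u)
    (hu' : u ≤ T.P / 2) : 0 ≤ T.scaleDensity W u := by
  have := T.one_add_pos h0 u
  have := h0 u
  exact mul_nonneg (by positivity) (sub_nonneg.2 (T.mul_f_le_F hp hu hu'))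

lemma integral_scaleDensity_nonneg (hp : 1 < p) (hW : Continuous W) (h0 : ∀ u, 0 ≤ W u)
    (h1 : ∀ u, W u ≤ 1) (hanti : Antitone W) {x : ℝ} (hx : 0 ≤ x) :
    0 ≤ ∫ u in (0 : ℝ)..x, T.scaleDensity W u := by
  have hP := T.P_pos
  rcases le_total x (T.P / 2) with h | h
  · exact intervalIntegral.integral_nonneg hx fun u hu =>
      T.scaleDensity_nonneg hp h0 hu.1 (hu.2.trans h)
  · refine le_trans ?_ (T.integral_scaleDensity_ge hp hW h0 h1 hanti h)
    exact intervalIntegral.integral_nonneg (by linarith) fun u hu =>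
      T.scaleDensity_nonneg hp h0 hu.1 hu.2

lemma integral_scaleDensity_pos (hp : 1 < p) (hW : Continuous W) (h0 : ∀ u, 0 ≤ W u)
    (h1 : ∀ u, W u ≤ 1) (hanti : Antitone W) (hW0 : 0 < W 0) {x : ℝ} (hx : 0 < x) :
    0 < ∫ u in (0 : ℝ)..x, T.scaleDensity W u := by
  have hP := T.P_pos
  have key : ∀ y, 0 < y → y ≤ T.P / 2 → 0 < ∫ u in (0 : ℝ)..y, T.scaleDensity W u := by
    intro y hy hy'
    have hev : ∀ᶠ u in 𝓝[>] (0 : ℝ), 0 < W u :=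
      (hW.continuousAt.eventually (lt_mem_nhds hW0)).filter_mono nhdsWithin_le_nhds
    obtain ⟨u, hWu, hu0, huy⟩ := (hev.and (Ioo_mem_nhdsGT hy)).exists
    refine intervalIntegral.integral_pos hy (T.continuous_scaleDensity hp hW h0).continuousOn
      (fun t ht => T.scaleDensity_nonneg hp h0 ht.1.le (ht.2.trans hy')) ⟨u, ⟨hu0.le, huy.le⟩, ?_⟩
    have := T.one_add_pos h0 u
    exact mul_pos (by positivity) (sub_pos.2 (T.mul_f_lt_F hp hu0 (huy.le.trans hy')))
  rcases le_total x (T.P / 2) with h | h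
  · exact key x hx h
  · exact (key _ (by linarith) le_rfl).trans_le (T.integral_scaleDensity_ge hp hW h0 h1 hanti h)

end PTrig

namespace PTrig

variable {p : ℝ} {T : PTrig p}

lemma Angle.exists_inverse {a : ℝ} (ha : 0 < a) {k φ : ℝ → ℝ} (hk : ∀ x, 0 ≤ k x)
    (h : T.Angle a k φ) :
    StrictMono φ ∧ ∃ X : ℝ → ℝ, Continuous X ∧ Monotone X ∧ ∀ x, X (φ x) = x := by
  have hpos : ∀ x, a ≤ a + k x * T.F (φ x) := fun x => by
    have := mul_nonneg (hk x) (T.F_nonneg (φ x))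
    linarith
  have hmono : StrictMono φ := strictMono_of_deriv_pos fun x => by
    rw [(h x).deriv]
    exact ha.trans_le (hpos x)
  have hM : Monotone fun x => φ x - a * x := by
    have hd : ∀ x, HasDerivAt (fun x => φ x - a * x) (a + k x * T.F (φ x) - a * 1) x := fun x =>
      (h x).fun_sub ((hasDerivAt_id x).const_mul a)
    refine monotone_of_deriv_nonneg (fun x => (hd x).differentiableAt) fun x => ?_
    rw [(hd x).deriv]
    linarith [hpos x]
  have hsurj : Function.Surjective φ := by
    refine h.continuous.surjective ?_ ?_
    · refine tendsto_atTop_mono' _ ?_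
        (tendsto_atTop_add_const_right _ (φ 0) (tendsto_id.const_mul_atTop ha))
      filter_upwards [eventually_ge_atTop 0] with x hx
      have := hM hx
      simp only [mul_zero, sub_zero] at this
      simp only [id]
      linarith
    · refine tendsto_atBot_mono' _ ?_
        (tendsto_atBot_add_const_right _ (φ 0) (tendsto_id.const_mul_atBot ha))
      filter_upwards [eventually_le_atBot 0] with x hx
      have := hM hx
      simp only [mul_zero, sub_zero] at this
      simp only [id]
      linarith
  let e := hmono.orderIsoOfSurjective φ hsurj
  exact ⟨hmono, e.symm, e.symm.continuous, e.symm.monotone, fun x => e.symm_apply_apply x⟩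

lemma Angle.integral_scale_eq (hp : 1 < p) {a : ℝ} (ha : 0 < a) {k φ : ℝ → ℝ} (hk : Continuous k)
    (hk0 : ∀ x, 0 ≤ k x) (hka : ∀ x, k x ≤ a) (hanti : Antitone k) (h0 : φ 0 = 0)
    (h : T.Angle a k φ) :
    ∃ W : ℝ → ℝ, Continuous W ∧ (∀ u, 0 ≤ W u) ∧ (∀ u, W u ≤ 1) ∧ Antitone W ∧ W 0 = k 0 / a ∧
      ∀ x, ∫ t in (0 : ℝ)..x, k t * (T.F (φ t) - φ t * T.f (φ t)) *
        Real.exp (-∫ r in (0 : ℝ)..t, k r * (p * T.f (φ r))) =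
        ∫ u in (0 : ℝ)..(φ x), T.scaleDensity W u := by
  obtain ⟨-, X, hXc, hXm, hX⟩ := h.exists_inverse ha hk0
  have cφ := h.continuous
  have cf := T.continuous_f hp
  have cF := T.continuous_F hp
  have hW : Continuous fun u => k (X u) / a := by fun_prop
  have hW0 : ∀ u, 0 ≤ k (X u) / a := fun u => div_nonneg (hk0 _) ha.le
  refine ⟨fun u => k (X u) / a, hW, hW0,
    fun u => (div_le_one ha).2 (hka _), fun u v huv => ?_, ?_, fun x => ?_⟩
  · exact div_le_div_of_nonneg_right (hanti (hXm huv)) ha.le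
  · have := hX 0
    rw [h0] at this
    simp only [this]
  set W : ℝ → ℝ := fun u => k (X u) / a with hWd
  have hWφ : ∀ t, W (φ t) = k t / a := fun t => by simp only [hWd, hX]
  have hden : ∀ t, 0 < a + k t * T.F (φ t) := fun t => by
    have := mul_nonneg (hk0 t) (T.F_nonneg (φ t))
    linarith
  have cLd := T.continuous_logDensity hp hW hW0
  have hlog : ∀ x, T.logWeight W (φ x) = ∫ r in (0 : ℝ)..x, k r * (p * T.f (φ r)) := by
    intro x
    have := intervalIntegral.integral_comp_mul_deriv (a := 0) (b := x) (f := φ)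
      (f' := fun t => a + k t * T.F (φ t))
      (g := fun t => W t * (p * T.f t) / (1 + W t * T.F t)) (fun t _ => h t)
      (Continuous.continuousOn (by fun_prop)) cLd
    rw [h0] at this
    rw [logWeight, ← this]
    refine intervalIntegral.integral_congr fun t _ => ?_
    have := hden t
    have h2 : (1 : ℝ) + k t / a * T.F (φ t) = (a + k t * T.F (φ t)) / a := by field_simp
    simp only [Function.comp, hWφ, h2]
    field_simp
  have := intervalIntegral.integral_comp_mul_deriv (a := 0) (b := x) (f := φ)
    (f' := fun t => a + k t * T.F (φ t)) (g := T.scaleDensity W) (fun t _ => h t)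
    (Continuous.continuousOn (by fun_prop)) (T.continuous_scaleDensity hp hW hW0)
  rw [h0] at this
  rw [← this]
  refine intervalIntegral.integral_congr fun t _ => ?_
  have := hden t
  have h2 : (1 : ℝ) + k t / a * T.F (φ t) = (a + k t * T.F (φ t)) / a := by field_simp
  simp only [Function.comp, scaleDensity, hlog, hWφ, h2]
  generalize Real.exp (-∫ r in (0 : ℝ)..t, k r * (p * T.f (φ r))) = E
  field_simp

/-- The derivative of a scaled family of angles with respect to the scaling parameter. -/
lemma hasDerivAt_family (hp : 1 < p) {h : ℝ → ℝ} (hh : Continuous h) {B : ℝ}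
    (hB : ∀ x, |h x| ≤ B) {φ : ℝ → ℝ → ℝ} (h0 : ∀ s, φ s 0 = 0)
    (hφ : ∀ s, T.Angle (Real.exp s) (fun x => Real.exp (-(p - 1) * s) * h x) (φ s)) (x s : ℝ) :
    HasDerivAt (fun s => φ s x)
      (Real.exp (∫ t in (0 : ℝ)..x, Real.exp (-(p - 1) * s) * h t * (p * T.f (φ s t))) *
        ∫ t in (0 : ℝ)..x, (Real.exp s + -(p - 1) * Real.exp (-(p - 1) * s) * h t * T.F (φ s t)) *
          Real.exp (-∫ r in (0 : ℝ)..t, Real.exp (-(p - 1) * s) * h r * (p * T.f (φ s r)))) s := by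
  have cΦ : Continuous fun z : ℝ × ℝ => φ z.1 z.2 :=
    continuous_angle_family hp (a := fun s => Real.exp s)
      (c₀ := fun _ => 0) (c₁ := fun s => Real.exp (-(p - 1) * s))
      (by fun_prop) (by fun_prop) (by fun_prop) hh hB h0 fun s => by simpa using hφ s
  have cQ := T.continuous_Fdiff hp
  have cF := T.continuous_F hp
  have cφ := (hφ s).continuous
  have dc : ∀ s, HasDerivAt (fun s => Real.exp (-(p - 1) * s))
      (-(p - 1) * Real.exp (-(p - 1) * s)) s := fun s => by
    have := ((hasDerivAt_id s).const_mul (-(p - 1))).exp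
    simpa [mul_comm] using this
  have cc : Continuous fun s => -(p - 1) * Real.exp (-(p - 1) * s) := by fun_prop
  have cd1 : Continuous fun s' => divDiff Real.exp s s' :=
    (continuous_divDiff Real.continuous_exp).comp (by fun_prop : Continuous fun s' : ℝ => (s, s'))
  have cd2 : Continuous fun s' => divDiff (fun s => -(p - 1) * Real.exp (-(p - 1) * s)) s s' :=
    (continuous_divDiff cc).comp (by fun_prop : Continuous fun s' : ℝ => (s, s'))
  have cA : Continuous fun z : ℝ × ℝ =>
      Real.exp (-(p - 1) * z.1) * h z.2 * T.Fdiff (φ s z.2) (φ z.1 z.2) := by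
    have : Continuous fun z : ℝ × ℝ => T.Fdiff (φ s z.2) (φ z.1 z.2) :=
      cQ.comp ((cφ.comp continuous_snd).prodMk cΦ)
    fun_prop
  have cI : Continuous fun z : ℝ × ℝ => ∫ r in (0 : ℝ)..z.2,
      Real.exp (-(p - 1) * z.1) * h r * T.Fdiff (φ s r) (φ z.1 r) :=
    intervalIntegral.continuous_parametric_intervalIntegral_of_continuous
      (f := fun (z : ℝ × ℝ) (r : ℝ) =>
        Real.exp (-(p - 1) * z.1) * h r * T.Fdiff (φ s r) (φ z.1 r))
      (cA.comp (by fun_prop : Continuous fun y : (ℝ × ℝ) × ℝ => (y.1.1, y.2))) continuous_snd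
  have cJ : Continuous fun s' : ℝ => ∫ t in (0 : ℝ)..x, (divDiff Real.exp s s' +
      divDiff (fun s => -(p - 1) * Real.exp (-(p - 1) * s)) s s' * h t * T.F (φ s t)) *
      Real.exp (-∫ r in (0 : ℝ)..t,
        Real.exp (-(p - 1) * s') * h r * T.Fdiff (φ s r) (φ s' r)) := by
    refine intervalIntegral.continuous_parametric_intervalIntegral_of_continuous' ?_ 0 x
    unfold Function.uncurry
    have := cI.neg.rexp
    fun_prop
  have cI' : Continuous fun s' : ℝ => ∫ r in (0 : ℝ)..x,
      Real.exp (-(p - 1) * s') * h r * T.Fdiff (φ s r) (φ s' r) :=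
    cI.comp (by fun_prop : Continuous fun s' : ℝ => (s', x))
  have key := hasDerivAt_of_eq_mul (f := fun s => φ s x) (s := s)
    (cI'.rexp.fun_mul cJ).continuousAt fun s' => ?_
  · simpa only [divDiff_self, T.Fdiff_self] using key
  · have := (hφ s).sub_mul_exp hp (by fun_prop) (by fun_prop) (hφ s') x
    rw [h0, h0, sub_self, zero_add, Real.exp_neg, ← div_eq_mul_inv,
      div_eq_iff (Real.exp_ne_zero _)] at this
    simp only [this]
    rw [mul_left_comm, mul_comm (Real.exp (∫ t in (0 : ℝ)..x, _))]
    congr 1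
    rw [← intervalIntegral.integral_const_mul]
    refine intervalIntegral.integral_congr fun t _ => ?_
    rw [← divDiff_mul Real.hasDerivAt_exp Real.continuous_exp, ← sub_mul,
      ← divDiff_mul dc cc]
    ring

lemma hasDerivAt_scaled_family (hp : 1 < p) {h : ℝ → ℝ} (hh : Continuous h) {B : ℝ}
    (hB : ∀ x, |h x| ≤ B) {φ : ℝ → ℝ → ℝ} (h0 : ∀ s, φ s 0 = 0)
    (hφ : ∀ s, T.Angle (Real.exp s) (fun x => Real.exp (-(p - 1) * s) * h x) (φ s)) (x s : ℝ) :
    HasDerivAt (fun s => Real.exp (-s) * φ s x)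
      (-(Real.exp (-s) * p *
        Real.exp (∫ t in (0 : ℝ)..x, Real.exp (-(p - 1) * s) * h t * (p * T.f (φ s t))) *
        ∫ t in (0 : ℝ)..x, Real.exp (-(p - 1) * s) * h t *
          (T.F (φ s t) - φ s t * T.f (φ s t)) *
          Real.exp (-∫ r in (0 : ℝ)..t, Real.exp (-(p - 1) * s) * h r * (p * T.f (φ s r))))) s := by
  have cφ := (hφ s).continuous
  have cF := T.continuous_F hp
  have cf := T.continuous_f hp
  set A : ℝ → ℝ := fun t => Real.exp (-(p - 1) * s) * h t * (p * T.f (φ s t)) with hA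
  have cA : Continuous A := by fun_prop
  have cI : Continuous fun t => ∫ r in (0 : ℝ)..t, A r :=
    intervalIntegral.continuous_primitive (fun a b => cA.intervalIntegrable a b) 0
  have hd := hasDerivAt_family hp hh hB h0 hφ x s
  have hl := linear_ode (δ := φ s) (α := fun t => Real.exp s + Real.exp (-(p - 1) * s) * h t *
    T.F (φ s t) - A t * φ s t) (by fun_prop) cA (fun t => (hφ s t).congr_deriv (by ring)) x
  rw [h0, zero_add, Real.exp_neg, ← div_eq_mul_inv, div_eq_iff (Real.exp_ne_zero _)] at hl
  have he : HasDerivAt (fun s => Real.exp (-s)) (-Real.exp (-s)) s := by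
    simpa using (hasDerivAt_id s).neg.exp
  refine (he.fun_mul hd).congr_deriv ?_
  rw [hl]
  have hsub : ∫ t in (0 : ℝ)..x,
      (Real.exp s + -(p - 1) * Real.exp (-(p - 1) * s) * h t * T.F (φ s t)) *
          Real.exp (-∫ r in (0 : ℝ)..t, A r) =
      (∫ t in (0 : ℝ)..x, (Real.exp s + Real.exp (-(p - 1) * s) * h t *
        T.F (φ s t) - A t * φ s t) * Real.exp (-∫ r in (0 : ℝ)..t, A r)) -
      p * ∫ t in (0 : ℝ)..x, Real.exp (-(p - 1) * s) * h t *
          (T.F (φ s t) - φ s t * T.f (φ s t)) * Real.exp (-∫ r in (0 : ℝ)..t, A r) := by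
    rw [← intervalIntegral.integral_const_mul, ← intervalIntegral.integral_sub
      (Continuous.intervalIntegrable (by fun_prop) _ _)
      (Continuous.intervalIntegrable (by fun_prop) _ _)]
    refine intervalIntegral.integral_congr fun t _ => ?_
    simp only [hA]
    ring
  simp only [← hA] at hsub ⊢
  change _ + Real.exp (-s) * (Real.exp (∫ t in (0 : ℝ)..x, A t) * ∫ t in (0 : ℝ)..x,
    (Real.exp s + -(p - 1) * Real.exp (-(p - 1) * s) * h t * T.F (φ s t)) *
      Real.exp (-∫ r in (0 : ℝ)..t, A r)) = _
  rw [hsub]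
  ring

lemma Angle.integral_scale_nonneg (hp : 1 < p) {a : ℝ} (ha : 0 < a) {k φ : ℝ → ℝ}
    (hk : Continuous k) (hk0 : ∀ x, 0 ≤ k x) (hka : ∀ x, k x ≤ a) (hanti : Antitone k)
    (h0 : φ 0 = 0) (h : T.Angle a k φ) {x : ℝ} (hx : 0 ≤ x) :
    0 ≤ ∫ t in (0 : ℝ)..x, k t * (T.F (φ t) - φ t * T.f (φ t)) *
        Real.exp (-∫ r in (0 : ℝ)..t, k r * (p * T.f (φ r))) := by
  obtain ⟨W, hW, hW0, hW1, hWa, -, he⟩ := h.integral_scale_eq hp ha hk hk0 hka hanti h0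
  rw [he]
  have := (h.exists_inverse ha hk0).1.monotone hx
  exact T.integral_scaleDensity_nonneg hp hW hW0 hW1 hWa (by rwa [h0] at this)

lemma Angle.integral_scale_pos (hp : 1 < p) {a : ℝ} (ha : 0 < a) {k φ : ℝ → ℝ}
    (hk : Continuous k) (hk0 : ∀ x, 0 ≤ k x) (hka : ∀ x, k x ≤ a) (hanti : Antitone k)
    (h0 : φ 0 = 0) (h : T.Angle a k φ) (hk00 : 0 < k 0) {x : ℝ} (hx : 0 < x) :
    0 < ∫ t in (0 : ℝ)..x, k t * (T.F (φ t) - φ t * T.f (φ t)) *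
        Real.exp (-∫ r in (0 : ℝ)..t, k r * (p * T.f (φ r))) := by
  obtain ⟨W, hW, hW0, hW1, hWa, hWz, he⟩ := h.integral_scale_eq hp ha hk hk0 hka hanti h0
  rw [he]
  have := (h.exists_inverse ha hk0).1 hx
  exact T.integral_scaleDensity_pos hp hW hW0 hW1 hWa (by rw [hWz]; positivity)
    (by rwa [h0] at this)

/-- The rescaled angle decreases with the scaling parameter once this is large. -/
lemma antitone_scaled_family (hp : 1 < p) {h : ℝ → ℝ} (hh : Continuous h) {M : ℝ}
    (hn : ∀ x, 0 ≤ h x) (hM : ∀ x, h x ≤ M) (hanti : Antitone h) {φ : ℝ → ℝ → ℝ}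
    (h0 : ∀ s, φ s 0 = 0)
    (hφ : ∀ s, T.Angle (Real.exp s) (fun x => Real.exp (-(p - 1) * s) * h x) (φ s)) {x : ℝ}
    (hx : 0 ≤ x) {s₀ : ℝ} (hs₀ : M ≤ Real.exp (p * s₀)) :
    AntitoneOn (fun s => Real.exp (-s) * φ s x) (Ici s₀) ∧
      (0 < h 0 → 0 < x → StrictAntiOn (fun s => Real.exp (-s) * φ s x) (Ici s₀)) := by
  have hB : ∀ x, |h x| ≤ M := fun x => by rw [abs_of_nonneg (hn x)]; exact hM x
  have hd := hasDerivAt_scaled_family hp hh hB h0 hφ x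
  have hc : ContinuousOn (fun s => Real.exp (-s) * φ s x) (Ici s₀) := fun s _ =>
    (hd s).continuousAt.continuousWithinAt
  have k0 : ∀ s x, 0 ≤ Real.exp (-(p - 1) * s) * h x := fun s x =>
    mul_nonneg (Real.exp_pos _).le (hn x)
  have ka : ∀ s ∈ Ici s₀, ∀ x, Real.exp (-(p - 1) * s) * h x ≤ Real.exp s := by
    intro s hs x
    calc Real.exp (-(p - 1) * s) * h x ≤ Real.exp (-(p - 1) * s) * Real.exp (p * s) := by
          refine mul_le_mul_of_nonneg_left (((hM x).trans hs₀).trans ?_) (Real.exp_pos _).le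
          exact Real.exp_le_exp.2 (mul_le_mul_of_nonneg_left hs (by linarith))
      _ = Real.exp s := by rw [← Real.exp_add]; ring_nf
  have km : ∀ s, Antitone fun x => Real.exp (-(p - 1) * s) * h x := fun s x y hxy =>
    mul_le_mul_of_nonneg_left (hanti hxy) (Real.exp_pos _).le
  have hp0 : 0 < p := by linarith
  refine ⟨antitoneOn_of_deriv_nonpos (convex_Ici _) hc
    (fun s _ => (hd s).differentiableAt.differentiableWithinAt) fun s hs => ?_, fun h00 hx0 =>
    strictAntiOn_of_deriv_neg (convex_Ici _) hc fun s hs => ?_⟩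
  · rw [(hd s).deriv, neg_nonpos]
    exact mul_nonneg (by positivity) ((hφ s).integral_scale_nonneg hp (Real.exp_pos s)
      (by fun_prop) (k0 s) (ka s (interior_subset hs)) (km s) (h0 s) hx)
  · rw [(hd s).deriv, neg_lt_zero]
    exact mul_pos (by positivity) ((hφ s).integral_scale_pos hp (Real.exp_pos s)
      (by fun_prop) (k0 s) (ka s (interior_subset hs)) (km s) (h0 s)
      (mul_pos (Real.exp_pos _) h00) hx0)

end PTrig

lemma continuous_comp_projIcc {q : ℝ → ℝ} {a b : ℝ} (hab : a ≤ b)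
    (hq : ContinuousOn q (Icc a b)) : Continuous fun x => q (projIcc a b hab x) :=
  (continuousOn_iff_continuous_domRestrict.1 hq).comp continuous_projIcc

namespace PTrig

variable {p : ℝ} {T : PTrig p}

lemma Angle.reflect {a : ℝ} {k φ : ℝ → ℝ} (h : T.Angle a k φ) (n : ℕ) :
    T.Angle a (fun x => k (1 - x)) fun x => n * T.P - φ (1 - x) := by
  intro x
  have := ((h (1 - x)).comp x ((hasDerivAt_id x).const_sub 1)).const_sub (n * T.P)
  refine this.congr_deriv ?_
  rw [T.F_sub_nat]
  ring

end PTrig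

lemma le_of_single_barrier {q : ℝ → ℝ} {x0 : ℝ} (hx0 : x0 ∈ Icc (0 : ℝ) 1)
    (hmono : MonotoneOn q (Icc 0 x0)) (hanti : AntitoneOn q (Icc x0 1)) {x : ℝ}
    (hx : x ∈ Icc (0 : ℝ) 1) : x ≤ x0 ∧ q 0 ≤ q x ∨ x0 ≤ x ∧ q 1 ≤ q x := by
  rcases le_total x x0 with h | h
  · exact Or.inl ⟨h, hmono ⟨le_rfl, hx0.1⟩ ⟨hx.1, h⟩ hx.1⟩
  · exact Or.inr ⟨h, hanti ⟨h, hx.2⟩ ⟨hx0.2, le_rfl⟩ hx.2⟩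

lemma log_ratio_eq {p a b n m : ℝ} (hp : 0 < p) (ha : 0 < a) (hb : 0 < b) (hn : 0 < n) (hm : 0 < m)
    (h : a / b = n ^ p / m ^ p) :
    Real.exp (-(Real.log a / p)) * n = Real.exp (-(Real.log b / p)) * m := by
  have := congrArg Real.log h
  rw [Real.log_div ha.ne' hb.ne', Real.log_div (by positivity) (by positivity), Real.log_rpow hn,
    Real.log_rpow hm] at this
  rw [← Real.exp_log hn, ← Real.exp_log hm, ← Real.exp_add, ← Real.exp_add]
  congr 1
  field_simp
  linarith

end PLaplace

/-- equality λ_n/λ_m = n^p/m^p (with λ_n > λ_m ≥ -2q*) forces q ≡ 0 on (0,1). -/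
theorem eigenvalue_ratio_equality_rigidity
    (p : ℝ) (hp : 1 < p)
    (q : ℝ → ℝ) (hqc : ContinuousOn q (Set.Icc 0 1))
    (hqneg : ∀ x ∈ Set.Icc (0:ℝ) 1, q x ≤ 0)
    (x0 : ℝ) (hx0 : x0 ∈ Set.Icc (0:ℝ) 1)
    (hmono : MonotoneOn q (Set.Icc 0 x0)) (hanti : AntitoneOn q (Set.Icc x0 1))
    (Λ : ℕ → ℝ) (hΛmono : StrictMonoOn Λ {n | 1 ≤ n})
    (hEig : ∀ n : ℕ, 1 ≤ n → IsDirichletEigenvalue p q 0 1 (Λ n))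
    (hAll : ∀ μ : ℝ, IsDirichletEigenvalue p q 0 1 μ → ∃ n : ℕ, 1 ≤ n ∧ μ = Λ n) :
    ∀ m n : ℕ, 1 ≤ m → m < n →
      -2 * min (q 0) (q 1) ≤ Λ m → Λ m < Λ n →
      Λ n / Λ m = (n : ℝ) ^ p / (m : ℝ) ^ p →
      ∀ x ∈ Set.Ioo (0:ℝ) 1, q x = 0 := by
  intro m n hm hmn hΛm hlt hratio x hx
  by_contra hne
  have hp0 : 0 < p := by linarith
  have hxI := Set.Ioo_subset_Icc_self hx
  have hqx : q x < 0 := lt_of_le_of_ne (hqneg x hxI) hne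
  have hbar := fun y hy => PLaplace.le_of_single_barrier hx0 hmono hanti (x := y) hy
  set M : ℝ := -min (q 0) (q 1) with hM
  have hqM : ∀ y ∈ Set.Icc (0 : ℝ) 1, -q y ≤ M := by
    intro y hy
    rcases hbar y hy with h | h
    · linarith [min_le_left (q 0) (q 1), h.2]
    · linarith [min_le_right (q 0) (q 1), h.2]
  have hM0 : 0 < M := by linarith [hqM x hxI]
  have hΛm0 : 0 < Λ m := by linarith
  have hΛn0 : 0 < Λ n := hΛm0.trans hlt
  obtain ⟨T⟩ := PLaplace.exists_pTrig hp
  have hP := T.P_pos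
  have hx1 : 0 ≤ 1 - x0 := by linarith [hx0.2]
  set qt : ℝ → ℝ := fun x => q (Set.projIcc 0 1 zero_le_one x) with hqt
  have cqt : Continuous qt := PLaplace.continuous_comp_projIcc zero_le_one hqc
  have hqt' : ∀ x ∈ Set.Icc (0 : ℝ) 1, qt x = q x := fun x hx => by
    simp only [hqt, Set.projIcc_of_mem zero_le_one hx]
  have hqtB : ∀ x, |qt x| ≤ M := fun x => by
    rw [abs_of_nonpos (hqneg _ (Subtype.mem _))]
    exact hqM _ (Subtype.mem _)
  have memL : ∀ y ∈ Set.Icc 0 x0, y ∈ Set.Icc (0 : ℝ) 1 := fun y hy => ⟨hy.1, hy.2.trans hx0.2⟩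
  have memR' : ∀ y ∈ Set.Icc 0 (1 - x0), 1 - y ∈ Set.Icc x0 1 := fun y hy =>
    ⟨by linarith [hy.2], by linarith [hy.1]⟩
  have memR : ∀ y ∈ Set.Icc 0 (1 - x0), 1 - y ∈ Set.Icc (0 : ℝ) 1 := fun y hy =>
    ⟨hx0.1.trans (memR' y hy).1, (memR' y hy).2⟩
  set hL : ℝ → ℝ := fun x => -q (Set.projIcc 0 x0 hx0.1 x) with hhL
  set hR : ℝ → ℝ := fun x => -q (1 - Set.projIcc 0 (1 - x0) hx1 x) with hhR
  have cL : Continuous hL := (PLaplace.continuous_comp_projIcc hx0.1 (hqc.mono memL)).neg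
  have cR : Continuous hR := (PLaplace.continuous_comp_projIcc (q := fun y => q (1 - y)) hx1
    (hqc.comp (by fun_prop) memR)).neg
  have nL : ∀ x, 0 ≤ hL x := fun x => neg_nonneg.2 (hqneg _ (memL _ (Subtype.mem _)))
  have nR : ∀ x, 0 ≤ hR x := fun x => neg_nonneg.2 (hqneg _ (memR _ (Subtype.mem _)))
  have bL : ∀ x, hL x ≤ M := fun x => hqM _ (memL _ (Subtype.mem _))
  have bR : ∀ x, hR x ≤ M := fun x => hqM _ (memR _ (Subtype.mem _))
  have aL : Antitone hL := fun x y hxy => neg_le_neg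
    (hmono (Subtype.mem _) (Subtype.mem _) (Set.monotone_projIcc hx0.1 hxy))
  have aR : Antitone hR := fun x y hxy => neg_le_neg
    (hanti (memR' _ (Subtype.mem _)) (memR' _ (Subtype.mem _))
      (sub_le_sub_left (Subtype.coe_le_coe.2 (Set.monotone_projIcc hx1 hxy)) 1))
  have hex : ∀ h : ℝ → ℝ, Continuous h → (∀ x, 0 ≤ h x) → (∀ x, h x ≤ M) → ∀ s : ℝ,
      ∃ φ : ℝ → ℝ, φ 0 = 0 ∧
        T.Angle (Real.exp s) (fun x => Real.exp (-(p - 1) * s) * h x) φ := by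
    intro h ch nh bh s
    refine PLaplace.PTrig.exists_angle hp _ (by fun_prop) (K := Real.exp (-(p - 1) * s) * M) fun x => ?_
    rw [abs_of_nonneg (mul_nonneg (Real.exp_pos _).le (nh x))]
    exact mul_le_mul_of_nonneg_left (bh x) (Real.exp_pos _).le
  choose φ φ0 hφ using hex hL cL nL bL
  choose ψ ψ0 hψ using hex hR cR nR bR
  have key : ∀ j : ℕ, 1 ≤ j → ∀ s, Real.exp (p * s) = Λ j →
      φ s x0 + ψ s (1 - x0) = j * T.P := by
    intro j hj s hs
    have hcoef : Λ j * Real.exp (-(p - 1) * s) - Real.exp s = 0 := by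
      rw [← hs, ← Real.exp_add, sub_eq_zero]
      ring_nf
    have ck : Continuous fun x => (Λ j * Real.exp (-(p - 1) * s) - Real.exp s) +
        -Real.exp (-(p - 1) * s) * qt x := by fun_prop
    obtain ⟨ζ, ζ0, hζ⟩ := PLaplace.PTrig.exists_angle (T := T) hp (Real.exp s) ck
      (K := Real.exp (-(p - 1) * s) * M) fun x => by
        rw [hcoef, zero_add, abs_mul, abs_neg, abs_of_pos (Real.exp_pos _)]
        exact mul_le_mul_of_nonneg_left (hqtB x) (Real.exp_pos _).le
    have ζ1 := PLaplace.PTrig.angle_eq_of_eigenvalue hp cqt hqt' hqtB hΛmono hEig hAll hj ζ0 hζ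
    have e1 : φ s x0 = ζ x0 := by
      refine (hφ s).eqOn hp (by fun_prop) ck hζ (by rw [φ0, ζ0]) (c := x0) (fun y hy => ?_)
        ⟨hx0.1, le_rfl⟩
      simp only [hcoef, hqt' y (memL y hy), hhL, Set.projIcc_of_mem hx0.1 hy]
      ring
    have e2 : ψ s (1 - x0) = j * T.P - ζ (1 - (1 - x0)) := by
      refine (hψ s).eqOn hp (by fun_prop) (ck.comp (by fun_prop : Continuous fun x : ℝ => 1 - x))
        (hζ.reflect j) (by rw [ψ0, sub_zero, ζ1, sub_self]) (c := 1 - x0) (fun y hy => ?_)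
        ⟨hx1, le_rfl⟩
      simp only [Function.comp, hcoef, hqt' _ (memR y hy), hhR, Set.projIcc_of_mem hx1 hy]
      ring
    rw [e1, e2, sub_sub_cancel]
    ring
  have hexp : ∀ {c : ℝ}, 0 < c → Real.exp (p * (Real.log c / p)) = c := fun {c} hc => by
    rw [mul_div_cancel₀ _ hp0.ne', Real.exp_log hc]
  have hs : Real.log (Λ m) / p < Real.log (Λ n) / p :=
    div_lt_div_of_pos_right (Real.log_lt_log hΛm0 hlt) hp0
  have keym := key m hm _ (hexp hΛm0)
  have keyn := key n (by omega) _ (hexp hΛn0)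
  have hrat := PLaplace.log_ratio_eq hp0 hΛn0 hΛm0 (Nat.cast_pos.2 (by omega))
    (Nat.cast_pos.2 hm) hratio
  have hMm : M ≤ Real.exp (p * (Real.log (Λ m) / p)) := by rw [hexp hΛm0]; linarith
  have hφa := PLaplace.PTrig.antitone_scaled_family hp cL nL bL aL φ0 hφ hx0.1 hMm
  have hψa := PLaplace.PTrig.antitone_scaled_family hp cR nR bR aR ψ0 hψ hx1 hMm
  have hL0 : hL 0 = -q 0 := by simp [hhL]
  have hR0 : hR 0 = -q 1 := by simp [hhR]
  set a := Real.log (Λ m) / p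
  set b := Real.log (Λ n) / p
  have ha : a ∈ Set.Ici a := Set.self_mem_Ici
  have hb : b ∈ Set.Ici a := hs.le
  have heq : Real.exp (-b) * φ b x0 + Real.exp (-b) * ψ b (1 - x0) =
      Real.exp (-a) * φ a x0 + Real.exp (-a) * ψ a (1 - x0) := by
    rw [← mul_add, ← mul_add, keym, keyn, ← mul_assoc, ← mul_assoc, hrat]
  have h1 := hφa.1 ha hb hs.le
  have h2 := hψa.1 ha hb hs.le
  rcases hbar x hxI with h | h
  · have := hφa.2 (by rw [hL0]; linarith [h.2]) (hx.1.trans_le h.1) ha hb hs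
    simp only at h1 h2 this
    linarith
  · have := hψa.2 (by rw [hR0]; linarith [h.2]) (by linarith [h.1, hx.2]) ha hb hs
    simp only at h1 h2 this
    linarith
end

section
/- Let p > 1 and q ≡ 0. The Dirichlet eigenvalues of -((y')^{(p-1)})' = (p-1) λ y^{(p-1)} on [0,1] with y(0)=y(1)=0 are exactly λ_n = (n π_p)^p for n ≥ 1, where π_p = 2π/(p sin(π/p)); in particular λ_n / λ_m = n^p/m^p for all n, m ≥ 1. -/
/-- The generalized half-period π_p = 2π / (p sin(π/p)). -/
noncomputable def pip (p : ℝ) : ℝ := 2 * Real.pi / (p * Real.sin (Real.pi / p))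

open Set Filter Topology MeasureTheory

namespace GeneralizedSine

lemma pip_pos {p : ℝ} (hp : 1 < p) : 0 < pip p := by
  have hp0 : 0 < p := by linarith
  have : 0 < Real.sin (Real.pi / p) :=
    Real.sin_pos_of_pos_of_lt_pi (by positivity) (div_lt_self Real.pi_pos hp)
  unfold pip
  positivity

lemma beta_eq_pip {p : ℝ} (hp : 1 < p) :
    ProbabilityTheory.beta (1 / p) (1 - 1 / p) = p * (pip p / 2) := by
  have hp0 : p ≠ 0 := by positivity
  unfold ProbabilityTheory.beta pip
  rw [Real.Gamma_mul_Gamma_one_sub, add_sub_cancel, Real.Gamma_one, mul_one_div]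
  field_simp

/-- The derivative of the generalized inverse sine on `(-1, 1)`, extended by `1`. -/
noncomputable def arcsinSlope (p t : ℝ) : ℝ :=
  if |t| < 1 then (1 - |t| ^ p) ^ (-(1 / p)) else 1

/-- The inverse of the generalized sine on `[-1, 1]`, extended with slope `1` to the line. -/
noncomputable def arcsinP (p u : ℝ) : ℝ := ∫ t in (0 : ℝ)..u, arcsinSlope p t

lemma one_sub_abs_rpow_pos {p u : ℝ} (hp : 1 < p) (hu : |u| < 1) : 0 < 1 - |u| ^ p :=
  sub_pos.2 (Real.rpow_lt_one (abs_nonneg u) hu (by linarith))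

lemma one_le_arcsinSlope {p : ℝ} (hp : 1 < p) (t : ℝ) : 1 ≤ arcsinSlope p t := by
  unfold arcsinSlope
  split_ifs with h
  · refine Real.one_le_rpow_of_pos_of_le_one_of_nonpos (one_sub_abs_rpow_pos hp h) ?_ ?_
    · have := Real.rpow_nonneg (abs_nonneg t) p
      linarith
    · have : 0 < p := by linarith
      simp only [Left.neg_nonpos_iff]
      positivity
  · exact le_rfl

lemma arcsinSlope_neg (p t : ℝ) : arcsinSlope p (-t) = arcsinSlope p t := by
  simp [arcsinSlope]

lemma measurable_arcsinSlope (p : ℝ) : Measurable (arcsinSlope p) :=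
  Measurable.ite (measurableSet_lt (by fun_prop) (by fun_prop)) (by fun_prop) (by fun_prop)

lemma integrable_betaPDFReal {α β : ℝ} (hα : 0 < α) (hβ : 0 < β) :
    Integrable (ProbabilityTheory.betaPDFReal α β) := by
  refine ⟨(ProbabilityTheory.measurable_betaPDFReal α β).aestronglyMeasurable, ?_⟩
  rw [hasFiniteIntegral_iff_ofReal (ae_of_all _ fun x => ?_)]
  · exact (ProbabilityTheory.lintegral_betaPDF_eq_one hα hβ).trans_lt ENNReal.one_lt_top
  · by_cases h : 0 < x ∧ x < 1
    · exact (ProbabilityTheory.betaPDFReal_pos h.1 h.2 hα hβ).le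
    · simp [ProbabilityTheory.betaPDFReal, h]

lemma integral_betaPDFReal {α β : ℝ} (hα : 0 < α) (hβ : 0 < β) :
    ∫ x in Ioi 0, ProbabilityTheory.betaPDFReal α β x = 1 := by
  rw [setIntegral_eq_integral_of_forall_compl_eq_zero fun x hx => ?_,
    integral_eq_lintegral_of_nonneg_ae (ae_of_all _ fun x => ?_)
      (ProbabilityTheory.measurable_betaPDFReal α β).aestronglyMeasurable]
  · exact congrArg ENNReal.toReal (ProbabilityTheory.lintegral_betaPDF_eq_one hα hβ)
  · by_cases h : 0 < x ∧ x < 1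
    · exact (ProbabilityTheory.betaPDFReal_pos h.1 h.2 hα hβ).le
    · simp [ProbabilityTheory.betaPDFReal, h]
  · have : ¬ (0 < x ∧ x < 1) := fun h => hx h.1
    simp [ProbabilityTheory.betaPDFReal, this]

lemma indicator_arcsinSlope_eq {p : ℝ} (hp : 1 < p) {x : ℝ} (hx : x ∈ Ioi (0 : ℝ)) :
    (Ioo 0 1).indicator (arcsinSlope p) x = pip p / 2 * ((p * x ^ (p - 1)) •
      ProbabilityTheory.betaPDFReal (1 / p) (1 - 1 / p) (x ^ p)) := by
  have hx0 : 0 < x := hx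
  have hp0 : 0 < p := by linarith
  have hP := pip_pos hp
  unfold ProbabilityTheory.betaPDFReal
  by_cases h1 : x < 1
  · have hxp : 0 < x ^ p ∧ x ^ p < 1 :=
      ⟨Real.rpow_pos_of_pos hx0 p, Real.rpow_lt_one hx0.le h1 hp0⟩
    have hpow : x ^ (p - 1) * (x ^ p) ^ (1 / p - 1) = 1 := by
      rw [← Real.rpow_mul hx0.le, ← Real.rpow_add hx0]
      have : p - 1 + p * (1 / p - 1) = 0 := by field_simp; ring
      rw [this, Real.rpow_zero]
    rw [indicator_of_mem (show x ∈ Ioo (0 : ℝ) 1 from ⟨hx0, h1⟩), if_pos hxp, beta_eq_pip hp, arcsinSlope, abs_of_pos hx0,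
      if_pos h1, smul_eq_mul]
    have he : (1 - 1 / p - 1 : ℝ) = -(1 / p) := by ring
    rw [he]
    calc (1 - x ^ p) ^ (-(1 / p))
        = (x ^ (p - 1) * (x ^ p) ^ (1 / p - 1)) * (1 - x ^ p) ^ (-(1 / p)) := by
          rw [hpow, one_mul]
      _ = _ := by
          field_simp
  · have hxp : ¬ (0 < x ^ p ∧ x ^ p < 1) := fun h =>
      absurd h.2 (not_lt.2 (Real.one_le_rpow (not_lt.1 h1) hp0.le))
    have hx1 : x ∉ Ioo (0 : ℝ) 1 := fun h => h1 h.2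
    rw [if_neg hxp, indicator_of_notMem hx1]
    simp

lemma integrableOn_arcsinSlope_Ioo_zero_one {p : ℝ} (hp : 1 < p) :
    IntegrableOn (arcsinSlope p) (Ioo 0 1) := by
  have hp0 : 0 < p := by linarith
  have hq : 0 < 1 - 1 / p := by
    rw [sub_pos, div_lt_one hp0]; exact hp
  have h := ((integrableOn_Ioi_comp_rpow_iff _ hp0.ne').2
    (integrable_betaPDFReal (one_div_pos.2 hp0) hq).integrableOn).const_mul (pip p / 2)
  rw [abs_of_pos hp0] at h
  have h' := (integrableOn_congr_fun (fun x hx => indicator_arcsinSlope_eq hp hx)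
    measurableSet_Ioi).2 h
  have h2 := h'.mono_set (Ioo_subset_Ioi_self : Ioo (0 : ℝ) 1 ⊆ Ioi 0)
  exact (integrableOn_congr_fun (fun x hx => indicator_of_mem hx _) measurableSet_Ioo).1 h2

lemma arcsinP_one {p : ℝ} (hp : 1 < p) : arcsinP p 1 = pip p / 2 := by
  have hp0 : 0 < p := by linarith
  have hq : 0 < 1 - 1 / p := by
    rw [sub_pos, div_lt_one hp0]; exact hp
  have h := integral_comp_rpow_Ioi_of_pos
    (g := ProbabilityTheory.betaPDFReal (1 / p) (1 - 1 / p)) hp0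
  rw [integral_betaPDFReal (one_div_pos.2 hp0) hq] at h
  have h2 := setIntegral_congr_fun (μ := volume) measurableSet_Ioi
    (fun x hx => indicator_arcsinSlope_eq hp hx)
  rw [integral_const_mul, h, mul_one, setIntegral_indicator measurableSet_Ioo,
    inter_eq_right.2 (fun x hx => hx.1)] at h2
  rw [arcsinP, intervalIntegral.integral_of_le zero_le_one, integral_Ioc_eq_integral_Ioo, h2]

lemma intervalIntegrable_arcsinSlope {p : ℝ} (hp : 1 < p) (a b : ℝ) :
    IntervalIntegrable (arcsinSlope p) volume a b := by
  have h01 : IntervalIntegrable (arcsinSlope p) volume 0 1 := by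
    rw [intervalIntegrable_iff_integrableOn_Ioo_of_le zero_le_one]
    exact integrableOn_arcsinSlope_Ioo_zero_one hp
  have h0 : ∀ b, 0 ≤ b → IntervalIntegrable (arcsinSlope p) volume 0 b := fun b hb => by
    have h1 : IntervalIntegrable (arcsinSlope p) volume 1 (max 1 b) := by
      refine (intervalIntegrable_const (c := (1 : ℝ))).congr fun t ht => ?_
      rw [uIoc_of_le (le_max_left _ _)] at ht
      have : ¬ |t| < 1 := not_lt.2 (ht.1.le.trans (le_abs_self t))
      simp [arcsinSlope, this]
    refine (h01.trans h1).mono_set ?_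
    rw [uIcc_of_le hb, uIcc_of_le (zero_le_one.trans (le_max_left _ _))]
    exact Icc_subset_Icc_right (le_max_right _ _)
  have h : ∀ b, IntervalIntegrable (arcsinSlope p) volume 0 b := fun b => by
    rcases le_total 0 b with hb | hb
    · exact h0 b hb
    · have := (IntervalIntegrable.iff_comp_neg).1 (h0 (-b) (by linarith))
      simpa [arcsinSlope_neg] using this
  exact (h a).symm.trans (h b)

lemma arcsinP_zero (p : ℝ) : arcsinP p 0 = 0 := by simp [arcsinP]

lemma arcsinP_neg (p u : ℝ) : arcsinP p (-u) = -arcsinP p u := by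
  have := intervalIntegral.integral_comp_neg (a := 0) (b := u) (arcsinSlope p)
  simp only [arcsinSlope_neg, neg_zero] at this
  rw [arcsinP, arcsinP, this, intervalIntegral.integral_symm]

lemma continuous_arcsinP {p : ℝ} (hp : 1 < p) : Continuous (arcsinP p) :=
  intervalIntegral.continuous_primitive (intervalIntegrable_arcsinSlope hp) 0

lemma sub_le_arcsinP_sub {p : ℝ} (hp : 1 < p) {a b : ℝ} (hab : a ≤ b) :
    b - a ≤ arcsinP p b - arcsinP p a := by
  rw [arcsinP, arcsinP, intervalIntegral.integral_interval_sub_left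
    (intervalIntegrable_arcsinSlope hp _ _) (intervalIntegrable_arcsinSlope hp _ _)]
  have := intervalIntegral.integral_mono_on hab (intervalIntegrable_const (c := (1 : ℝ)))
    (intervalIntegrable_arcsinSlope hp a b) fun t _ => one_le_arcsinSlope hp t
  simpa using this

lemma strictMono_arcsinP {p : ℝ} (hp : 1 < p) : StrictMono (arcsinP p) := fun a b hab => by
  have := sub_le_arcsinP_sub hp hab.le
  linarith

lemma surjective_arcsinP {p : ℝ} (hp : 1 < p) : Function.Surjective (arcsinP p) := by
  refine (continuous_arcsinP hp).surjective ?_ ?_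
  · refine tendsto_atTop_mono' _ ?_ tendsto_id
    filter_upwards [eventually_ge_atTop 0] with b hb
    simpa [arcsinP_zero] using sub_le_arcsinP_sub hp hb
  · refine tendsto_atBot_mono' _ ?_ tendsto_id
    filter_upwards [eventually_le_atBot 0] with b hb
    simpa [arcsinP_zero] using sub_le_arcsinP_sub hp hb

/-- `arcsinP p` as an order isomorphism of the line. -/
noncomputable def arcsinIso {p : ℝ} (hp : 1 < p) : ℝ ≃o ℝ :=
  (strictMono_arcsinP hp).orderIsoOfSurjective _ (surjective_arcsinP hp)

lemma hasDerivAt_arcsinP {p u : ℝ} (hp : 1 < p) (hu : |u| < 1) :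
    HasDerivAt (arcsinP p) ((1 - |u| ^ p) ^ (-(1 / p))) u := by
  have hev : arcsinSlope p =ᶠ[𝓝 u] fun t => (1 - |t| ^ p) ^ (-(1 / p)) := by
    filter_upwards [continuous_abs.continuousAt.eventually_lt continuousAt_const hu] with t ht
    rw [arcsinSlope, if_pos ht]
  have hc : ContinuousAt (arcsinSlope p) u := by
    refine ContinuousAt.congr ?_ hev.symm
    have hpos := one_sub_abs_rpow_pos hp hu
    refine ContinuousAt.rpow_const ?_ (Or.inl hpos.ne')
    exact continuousAt_const.sub
      (continuous_abs.continuousAt.rpow_const (Or.inr (by linarith)))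
  have hu' : arcsinSlope p u = (1 - |u| ^ p) ^ (-(1 / p)) := hev.self_of_nhds
  rw [← hu']
  exact intervalIntegral.integral_hasDerivAt_right (intervalIntegrable_arcsinSlope hp _ _)
    (measurable_arcsinSlope p).stronglyMeasurable.stronglyMeasurableAtFilter hc

lemma sign_eventually_eq {f : ℝ → ℝ} {x : ℝ} (hf : ContinuousAt f x) (h0 : f x ≠ 0) :
    ∀ᶠ t in 𝓝 x, Real.sign (f t) = Real.sign (f x) := by
  rcases lt_or_gt_of_ne h0 with h | h
  · filter_upwards [hf.eventually_lt continuousAt_const h] with t ht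
    rw [Real.sign_of_neg ht, Real.sign_of_neg h]
  · filter_upwards [continuousAt_const.eventually_lt hf h] with t ht
    rw [Real.sign_of_pos ht, Real.sign_of_pos h]

lemma abs_sign_of_ne_zero {r : ℝ} (h : r ≠ 0) : |Real.sign r| = 1 := by
  rcases Real.sign_apply_eq_of_ne_zero r h with h | h <;> simp [h]

lemma sign_mul_sign_of_ne_zero {r : ℝ} (h : r ≠ 0) : Real.sign r * Real.sign r = 1 := by
  rcases Real.sign_apply_eq_of_ne_zero r h with h | h <;> simp [h]

lemma div_abs_eq_sign {r : ℝ} (h : r ≠ 0) : r / |r| = Real.sign r := by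
  rcases lt_or_gt_of_ne h with h | h
  · rw [Real.sign_of_neg h, abs_of_neg h, div_neg, div_self h.ne]
  · rw [Real.sign_of_pos h, abs_of_pos h, div_self h.ne']

lemma continuousAt_sign_mul {f g : ℝ → ℝ} {x : ℝ} (hf : ContinuousAt f x)
    (hg : ContinuousAt g x) (h : f x = 0 → g x = 0) :
    ContinuousAt (fun t => Real.sign (f t) * g t) x := by
  by_cases h0 : f x = 0
  · have hg0 : Tendsto g (𝓝 x) (𝓝 0) := h h0 ▸ hg
    rw [ContinuousAt, h0, Real.sign_zero, zero_mul]
    refine squeeze_zero_norm (fun t => ?_) (by simpa using hg0.norm)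
    rw [norm_mul]
    refine mul_le_of_le_one_left (norm_nonneg _) ?_
    rcases Real.sign_apply_eq (f t) with h | h | h <;> simp [h]
  · refine ContinuousAt.congr (continuousAt_const.mul hg) (f := fun t => Real.sign (f x) * g t) ?_
    filter_upwards [sign_eventually_eq hf h0] with t ht
    rw [ht]

lemma hasDerivAt_of_eventually_ne {f g : ℝ → ℝ} {x : ℝ}
    (h : ∀ᶠ y in 𝓝[≠] x, HasDerivAt f (g y) y) (hf : ContinuousAt f x)
    (hg : ContinuousAt g x) : HasDerivAt f (g x) x := by
  have hdiff : DifferentiableOn ℝ f {y | HasDerivAt f (g y) y} := fun y hy =>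
    hy.differentiableAt.differentiableWithinAt
  have hr := h.filter_mono (nhdsGT_le_nhdsNE x)
  have hl := h.filter_mono (nhdsLT_le_nhdsNE x)
  have A := hasDerivWithinAt_Ici_of_tendsto_deriv hdiff hf.continuousWithinAt hr
    ((tendsto_inf_left hg).congr' (hr.mono fun y hy => hy.deriv.symm))
  have B := hasDerivWithinAt_Iic_of_tendsto_deriv hdiff hf.continuousWithinAt hl
    ((tendsto_inf_left hg).congr' (hl.mono fun y hy => hy.deriv.symm))
  simpa using B.union A

/-- The signed power `|s|^(p-2) s`. -/
noncomputable def signedPow (p s : ℝ) : ℝ := |s| ^ (p - 2) * s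

lemma continuous_signedPow {p : ℝ} (hp : 1 < p) : Continuous (signedPow p) := by
  have h := (contDiff_norm_rpow (E := ℝ) hp).continuous_deriv le_rfl
  have hd : deriv (fun x : ℝ => ‖x‖ ^ p) = fun x => p * signedPow p x := by
    funext x
    rw [signedPow, ← mul_assoc]
    exact (hasDerivAt_abs_rpow x hp).deriv
  rw [hd] at h
  have hp0 : p ≠ 0 := by positivity
  simpa [hp0] using h.const_mul p⁻¹

lemma hasDerivAt_abs_rpow_comp {f : ℝ → ℝ} {f' x p : ℝ} (hp : 1 < p) (hf : HasDerivAt f f' x) :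
    HasDerivAt (fun t => |f t| ^ p) (p * signedPow p (f x) * f') x := by
  have := (hasDerivAt_abs_rpow (f x) hp).comp x hf
  refine this.congr_deriv ?_
  rw [signedPow]
  ring

lemma signedPow_eq_zero_iff {p s : ℝ} : signedPow p s = 0 ↔ s = 0 := by
  refine ⟨fun h => ?_, fun h => by simp [signedPow, h]⟩
  by_contra hs
  exact mul_ne_zero (Real.rpow_pos_of_pos (abs_pos.2 hs) _).ne' hs h

lemma signedPow_mul_self {p : ℝ} (hp : 1 < p) (s : ℝ) : signedPow p s * s = |s| ^ p := by
  by_cases hs : s = 0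
  · simp [hs, signedPow, Real.zero_rpow (show p ≠ 0 by positivity)]
  · have h := Real.rpow_add (abs_pos.2 hs) (p - 2) 2
    rw [sub_add_cancel] at h
    rw [h, signedPow, Real.rpow_two, sq_abs]
    ring

lemma abs_signedPow {p s : ℝ} (hs : s ≠ 0) : |signedPow p s| = |s| ^ (p - 1) := by
  have h := Real.rpow_add (abs_pos.2 hs) (p - 2) 1
  rw [show p - 2 + 1 = p - 1 by ring, Real.rpow_one] at h
  rw [signedPow, abs_mul, abs_of_nonneg (Real.rpow_nonneg (abs_nonneg s) _), h]

lemma signedPow_const_mul {p c : ℝ} (hc : 0 < c) (s : ℝ) :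
    signedPow p (c * s) = c ^ (p - 1) * signedPow p s := by
  have h := Real.rpow_add hc (p - 2) 1
  rw [show p - 2 + 1 = p - 1 by ring, Real.rpow_one] at h
  rw [signedPow, signedPow, abs_mul, abs_of_pos hc, Real.mul_rpow hc.le (abs_nonneg s), h]
  ring

lemma one_lt_conj {p : ℝ} (hp : 1 < p) : 1 < p / (p - 1) := by
  rw [lt_div_iff₀ (by linarith)]
  linarith

lemma signedPow_conj_signedPow {p : ℝ} (hp : 1 < p) (s : ℝ) :
    signedPow (p / (p - 1)) (signedPow p s) = s := by
  by_cases hs : s = 0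
  · simp [hs, signedPow]
  · have hp1 : p - 1 ≠ 0 := by linarith
    rw [signedPow, abs_signedPow hs, signedPow, ← mul_assoc, ← Real.rpow_mul (abs_nonneg s),
      ← Real.rpow_add (abs_pos.2 hs)]
    have : (p - 1) * (p / (p - 1) - 2) + (p - 2) = 0 := by field_simp; ring
    rw [this, Real.rpow_zero, one_mul]

lemma abs_signedPow_rpow_conj {p : ℝ} (hp : 1 < p) (s : ℝ) :
    |signedPow p s| ^ (p / (p - 1)) = |s| ^ p := by
  by_cases hs : s = 0
  · have hp1 : p / (p - 1) ≠ 0 := by linarith [one_lt_conj hp]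
    simp [hs, signedPow, Real.zero_rpow hp1, Real.zero_rpow (show p ≠ 0 by positivity)]
  · have hp1 : p - 1 ≠ 0 := by linarith
    rw [abs_signedPow hs, ← Real.rpow_mul (abs_nonneg s), mul_div_cancel₀ _ hp1]

lemma continuousAt_of_signedPow {p x : ℝ} (hp : 1 < p) {v : ℝ → ℝ}
    (h : ContinuousAt (fun t => signedPow p (v t)) x) : ContinuousAt v x := by
  have := (continuous_signedPow (one_lt_conj hp)).continuousAt.comp h
  simpa only [Function.comp_def, signedPow_conj_signedPow hp] using this

lemma cos_arcsinP_of_abs_eq_one {p u : ℝ} (hp : 1 < p) (hu : |u| = 1) :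
    Real.cos (Real.pi / pip p * arcsinP p u) = 0 := by
  have hP := (pip_pos hp).ne'
  have h1 : Real.pi / pip p * arcsinP p 1 = Real.pi / 2 := by
    rw [arcsinP_one hp]; field_simp
  rcases eq_or_eq_neg_of_abs_eq hu with h | h
  · rw [h, h1, Real.cos_pi_div_two]
  · rw [h, arcsinP_neg, mul_neg, Real.cos_neg, h1, Real.cos_pi_div_two]

/-- A normalized solution of the free problem vanishing at both ends has frequency `n π_p`. -/
lemma exists_nat_of_normalized_solution {p k : ℝ} (hp : 1 < p) (hk : 0 < k) {u v : ℝ → ℝ}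
    (hu : ∀ x ∈ Icc (0 : ℝ) 1, HasDerivAt u (k * v x) x)
    (hv : ∀ x ∈ Icc (0 : ℝ) 1,
      HasDerivAt (fun t => signedPow p (v t)) (-(p - 1) * k * signedPow p (u x)) x)
    (huv : ∀ x ∈ Icc (0 : ℝ) 1, |u x| ^ p + |v x| ^ p = 1)
    (hu0 : u 0 = 0) (hu1 : u 1 = 0) : ∃ n : ℕ, 1 ≤ n ∧ k = n * pip p := by
  have hp0 : 0 < p := by linarith
  have hP := pip_pos hp
  set a : ℝ := Real.pi / pip p with ha
  have huc : ∀ x ∈ Icc (0 : ℝ) 1, ContinuousAt u x := fun x hx => (hu x hx).continuousAt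
  have hvc : ∀ x ∈ Icc (0 : ℝ) 1, ContinuousAt v x := fun x hx =>
    continuousAt_of_signedPow hp (hv x hx).continuousAt
  have hu_one : ∀ x ∈ Icc (0 : ℝ) 1, v x = 0 → |u x| = 1 := fun x hx h0 => by
    have h := huv x hx
    rw [h0, abs_zero, Real.zero_rpow hp0.ne', add_zero] at h
    exact (Real.rpow_left_inj (abs_nonneg _) zero_le_one hp0.ne').1 (by rw [h, Real.one_rpow])
  let X : ℝ → ℝ := fun x => Real.sin (a * arcsinP p (u x))
  let C : ℝ → ℝ := fun x => Real.sign (v x) * Real.cos (a * arcsinP p (u x))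
  have hFc : ∀ x ∈ Icc (0 : ℝ) 1, ContinuousAt (fun t => a * arcsinP p (u t)) x := fun x hx =>
    continuousAt_const.mul ((continuous_arcsinP hp).continuousAt.comp (huc x hx))
  have hXc : ∀ x ∈ Icc (0 : ℝ) 1, ContinuousAt X x := fun x hx =>
    Real.continuous_sin.continuousAt.comp (hFc x hx)
  have hCc : ∀ x ∈ Icc (0 : ℝ) 1, ContinuousAt C x := fun x hx =>
    continuousAt_sign_mul (hvc x hx) (Real.continuous_cos.continuousAt.comp (hFc x hx))
      fun h => cos_arcsinP_of_abs_eq_one hp (hu_one x hx h)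
  have hreg : ∀ x ∈ Icc (0 : ℝ) 1, v x ≠ 0 →
      HasDerivAt X (a * k * C x) x ∧ HasDerivAt C (-(a * k) * X x) x := by
    intro x hx hvx
    have hvp : 0 < |v x| := abs_pos.2 hvx
    have hr : 1 - |u x| ^ p = |v x| ^ p := by linarith [huv x hx]
    have hlt : |u x| < 1 := by
      have : |u x| ^ p < 1 := by linarith [Real.rpow_pos_of_pos hvp p]
      exact (Real.rpow_lt_rpow_iff (abs_nonneg _) zero_le_one hp0).1 (by rwa [Real.one_rpow])
    have hslope : (1 - |u x| ^ p) ^ (-(1 / p)) = |v x|⁻¹ := by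
      rw [hr, ← Real.rpow_mul hvp.le, show p * -(1 / p) = -1 by field_simp, Real.rpow_neg_one]
    have hF : HasDerivAt (fun t => a * arcsinP p (u t)) (a * k * Real.sign (v x)) x := by
      have h := ((hasDerivAt_arcsinP hp hlt).comp x (hu x hx)).const_mul a
      rw [hslope] at h
      refine h.congr_deriv ?_
      rw [← div_abs_eq_sign hvx]
      ring
    refine ⟨?_, ?_⟩
    · refine hF.sin.congr_deriv ?_
      simp only [C]
      ring
    · have h := (hF.cos.const_mul (Real.sign (v x))).congr_of_eventuallyEq (f₁ := C) (by
        filter_upwards [sign_eventually_eq (hvc x hx) hvx] with t ht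
        simp only [C, ht])
      refine h.congr_deriv ?_
      simp only [X]
      linear_combination (-(a * k) * Real.sin (a * arcsinP p (u x))) *
        sign_mul_sign_of_ne_zero hvx
  have hall : ∀ x ∈ Ioo (0 : ℝ) 1,
      HasDerivAt X (a * k * C x) x ∧ HasDerivAt C (-(a * k) * X x) x := by
    intro x hx
    have hxI := Ioo_subset_Icc_self hx
    by_cases hvx : v x = 0
    · have hne : -(p - 1) * k * signedPow p (u x) ≠ 0 := by
        have : u x ≠ 0 := fun h => by simpa [h] using hu_one x hxI hvx
        have h1 : p - 1 ≠ 0 := by linarith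
        exact mul_ne_zero (mul_ne_zero (neg_ne_zero.2 h1) hk.ne')
          (signedPow_eq_zero_iff.not.2 this)
      have hev : ∀ᶠ t in 𝓝[≠] x, t ∈ Icc (0 : ℝ) 1 ∧ v t ≠ 0 := by
        filter_upwards [(hv x hxI).eventually_ne (c := 0) hne,
          nhdsWithin_le_nhds (Ioo_mem_nhds hx.1 hx.2)] with t ht htI
        exact ⟨Ioo_subset_Icc_self htI, fun h => ht (signedPow_eq_zero_iff.2 h)⟩
      exact ⟨hasDerivAt_of_eventually_ne (g := fun t => a * k * C t)
          (hev.mono fun t ht => (hreg t ht.1 ht.2).1) (hXc x hxI)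
          (continuousAt_const.mul (hCc x hxI)),
        hasDerivAt_of_eventually_ne (g := fun t => -(a * k) * X t)
          (hev.mono fun t ht => (hreg t ht.1 ht.2).2) (hCc x hxI)
          (continuousAt_const.mul (hXc x hxI))⟩
    · exact hreg x hxI hvx
  have hR : ∃ c ∈ Ioo (0 : ℝ) 1, (fun _ => (0 : ℝ)) c =
      ((X 1 * Real.cos (a * k * 1) - C 1 * Real.sin (a * k * 1)) -
        (X 0 * Real.cos (a * k * 0) - C 0 * Real.sin (a * k * 0))) / (1 - 0) := by
    refine exists_hasDerivAt_eq_slope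
      (fun x => X x * Real.cos (a * k * x) - C x * Real.sin (a * k * x)) (fun _ => 0) zero_lt_one
      (fun x hx => ?_) fun x hx => ?_
    · refine ContinuousAt.continuousWithinAt ?_
      exact ((hXc x hx).mul (by fun_prop)).sub ((hCc x hx).mul (by fun_prop))
    · obtain ⟨h1, h2⟩ := hall x hx
      have hl : HasDerivAt (fun t : ℝ => a * k * t) (a * k) x := by
        simpa using (hasDerivAt_id x).const_mul (a * k)
      refine ((h1.mul hl.cos).sub (h2.mul hl.sin)).congr_deriv ?_
      ring
  obtain ⟨_, _, hR1⟩ := hR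
  have hX0 : X 0 = 0 := by simp [X, hu0, arcsinP_zero]
  have hX1 : X 1 = 0 := by simp [X, hu1, arcsinP_zero]
  have hv1 : v 1 ≠ 0 := fun h => by
    simpa [hu1] using hu_one 1 (right_mem_Icc.2 zero_le_one) h
  have hC1 : C 1 ≠ 0 := by
    have : Real.sign (v 1) ≠ 0 := fun h => hv1 (Real.sign_eq_zero_iff.1 h)
    simpa [C, hu1, arcsinP_zero] using this
  have hsin : Real.sin (a * k) = 0 := by
    simpa [hX0, hX1, hC1] using hR1
  obtain ⟨m, hm⟩ := Real.sin_eq_zero_iff.1 hsin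
  have hkm : k = m * pip p := by
    have h2 : Real.pi ≠ 0 := Real.pi_ne_zero
    rw [ha] at hm
    field_simp at hm
    linarith
  have hm0 : 0 < m := by
    have : (0 : ℝ) < m := by
      by_contra h
      have := mul_nonpos_of_nonpos_of_nonneg (not_lt.1 h) hP.le
      linarith
    exact_mod_cast this
  refine ⟨m.toNat, by omega, ?_⟩
  rw [hkm]
  congr 1
  exact_mod_cast (Int.toNat_of_nonneg hm0.le).symm

lemma energy_eq {p μ : ℝ} (hp : 1 < p) {y yd : ℝ → ℝ}
    (hy : ∀ x ∈ Icc (0 : ℝ) 1, HasDerivAt y (yd x) x)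
    (hw : ∀ x ∈ Icc (0 : ℝ) 1,
      HasDerivAt (fun t => signedPow p (yd t)) (-(p - 1) * μ * signedPow p (y x)) x) :
    ∀ x ∈ Icc (0 : ℝ) 1, |yd x| ^ p + μ * |y x| ^ p = |yd 0| ^ p + μ * |y 0| ^ p := by
  have hd : ∀ x ∈ Icc (0 : ℝ) 1, HasDerivAt (fun t => |yd t| ^ p + μ * |y t| ^ p) 0 x := by
    intro x hx
    have h1 := hasDerivAt_abs_rpow_comp (one_lt_conj hp) (hw x hx)
    simp only [abs_signedPow_rpow_conj hp, signedPow_conj_signedPow hp] at h1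
    have h2 := (hasDerivAt_abs_rpow_comp hp (hy x hx)).const_mul μ
    refine (h1.add h2).congr_deriv ?_
    have hp1 : p - 1 ≠ 0 := by linarith
    field_simp
    ring
  exact constant_of_has_deriv_right_zero
    (fun x hx => (hd x hx).continuousAt.continuousWithinAt)
    fun x hx => (hd x (Ico_subset_Icc_self hx)).hasDerivWithinAt

lemma eq_zero_of_nonpos {p μ : ℝ} (hp : 1 < p) (hμ : μ ≤ 0) {y yd : ℝ → ℝ}
    (hy : ∀ x ∈ Icc (0 : ℝ) 1, HasDerivAt y (yd x) x)
    (hw : ∀ x ∈ Icc (0 : ℝ) 1,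
      HasDerivAt (fun t => signedPow p (yd t)) (-(p - 1) * μ * signedPow p (y x)) x)
    (hy0 : y 0 = 0) (hy1 : y 1 = 0) : ∀ x ∈ Icc (0 : ℝ) 1, y x = 0 := by
  have hd : ∀ x ∈ Icc (0 : ℝ) 1, HasDerivAt (fun t => signedPow p (yd t) * y t)
      (-(p - 1) * μ * |y x| ^ p + |yd x| ^ p) x := by
    intro x hx
    refine ((hw x hx).mul (hy x hx)).congr_deriv ?_
    rw [← signedPow_mul_self hp, ← signedPow_mul_self hp]
    ring
  have hmono : MonotoneOn (fun t => signedPow p (yd t) * y t) (Icc 0 1) := by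
    refine monotoneOn_of_hasDerivWithinAt_nonneg (convex_Icc 0 1)
      (fun x hx => (hd x hx).continuousAt.continuousWithinAt)
      (fun x hx => (hd x (interior_subset hx)).hasDerivWithinAt) fun x hx => ?_
    have h1 := Real.rpow_nonneg (abs_nonneg (y x)) p
    have h2 := Real.rpow_nonneg (abs_nonneg (yd x)) p
    have h3 : 0 ≤ (p - 1) * (-μ) * |y x| ^ p :=
      mul_nonneg (mul_nonneg (by linarith) (by linarith)) h1
    linarith
  have hzero : ∀ x ∈ Icc (0 : ℝ) 1, yd x * y x = 0 := by
    intro x hx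
    have h1 := hmono (left_mem_Icc.2 zero_le_one) hx hx.1
    have h2 := hmono hx (right_mem_Icc.2 zero_le_one) hx.2
    simp only [hy0, hy1, mul_zero] at h1 h2
    rcases mul_eq_zero.1 (le_antisymm h2 h1) with h | h
    · rw [signedPow_eq_zero_iff.1 h, zero_mul]
    · rw [h, mul_zero]
  have hsq : ∀ x ∈ Icc (0 : ℝ) 1, HasDerivAt (fun t => y t * y t) 0 x := fun x hx =>
    ((hy x hx).mul (hy x hx)).congr_deriv (by linear_combination 2 * hzero x hx)
  intro x hx
  have h := constant_of_has_deriv_right_zero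
    (fun x hx => (hsq x hx).continuousAt.continuousWithinAt)
    (fun x hx => (hsq x (Ico_subset_Icc_self hx)).hasDerivWithinAt) x hx
  simpa [hy0] using h

lemma rpow_mul_inv_rpow_sub_one {p k : ℝ} (hk : 0 < k) : (k⁻¹) ^ (p - 1) * k ^ p = k := by
  rw [Real.inv_rpow hk.le, ← Real.rpow_neg hk.le, ← Real.rpow_add hk,
    show -(p - 1) + p = 1 by ring, Real.rpow_one]

lemma exists_nat_of_solution {p μ : ℝ} (hp : 1 < p) {y yd : ℝ → ℝ}
    (hne : ∃ x ∈ Icc (0 : ℝ) 1, y x ≠ 0)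
    (hy : ∀ x ∈ Icc (0 : ℝ) 1, HasDerivAt y (yd x) x)
    (hw : ∀ x ∈ Icc (0 : ℝ) 1,
      HasDerivAt (fun t => signedPow p (yd t)) (-(p - 1) * μ * signedPow p (y x)) x)
    (hy0 : y 0 = 0) (hy1 : y 1 = 0) : ∃ n : ℕ, 1 ≤ n ∧ μ = (n * pip p) ^ p := by
  obtain ⟨z, hz, hyz⟩ := hne
  have hp0 : p ≠ 0 := by positivity
  have hμ : 0 < μ := by
    by_contra h
    exact hyz (eq_zero_of_nonpos hp (not_lt.1 h) hy hw hy0 hy1 z hz)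
  have hE := energy_eq hp hy hw
  rw [hy0, abs_zero, Real.zero_rpow hp0, mul_zero, add_zero] at hE
  set E := |yd 0| ^ p
  have hE0 : 0 < E := by
    rw [← hE z hz]
    have h1 := mul_pos hμ (Real.rpow_pos_of_pos (abs_pos.2 hyz) p)
    have h2 := Real.rpow_nonneg (abs_nonneg (yd z)) p
    linarith
  obtain ⟨k, hk, hkμ⟩ : ∃ k : ℝ, 0 < k ∧ k ^ p = μ :=
    ⟨μ ^ p⁻¹, Real.rpow_pos_of_pos hμ _, Real.rpow_inv_rpow hμ.le hp0⟩
  obtain ⟨M, hM, hME⟩ : ∃ M : ℝ, 0 < M ∧ M ^ p = E / μ :=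
    ⟨(E / μ) ^ p⁻¹, Real.rpow_pos_of_pos (div_pos hE0 hμ) _,
      Real.rpow_inv_rpow (div_pos hE0 hμ).le hp0⟩
  have hMi : 0 < M⁻¹ := inv_pos.2 hM
  have hki : 0 < k⁻¹ := inv_pos.2 hk
  obtain ⟨n, hn, hkn⟩ := exists_nat_of_normalized_solution hp hk
    (u := fun x => M⁻¹ * y x) (v := fun x => (k⁻¹ * M⁻¹) * yd x)
    (fun x hx => ((hy x hx).const_mul M⁻¹).congr_deriv (by field_simp))
    (fun x hx => by
      simp only [signedPow_const_mul (mul_pos hki hMi), signedPow_const_mul hMi]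
      refine ((hw x hx).const_mul _).congr_deriv ?_
      rw [Real.mul_rpow hki.le hMi.le, ← hkμ]
      linear_combination (-(p - 1) * (M⁻¹) ^ (p - 1) * signedPow p (y x)) *
        rpow_mul_inv_rpow_sub_one (p := p) hk)
    (fun x hx => by
      simp only [abs_mul, abs_of_pos hki, abs_of_pos hMi]
      rw [Real.mul_rpow hMi.le (abs_nonneg _), Real.mul_rpow (mul_pos hki hMi).le (abs_nonneg _),
        Real.mul_rpow hki.le hMi.le, Real.inv_rpow hk.le, Real.inv_rpow hM.le, hkμ, hME]
      have := hE x hx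
      field_simp
      linarith)
    (by simp [hy0]) (by simp [hy1])
  exact ⟨n, hn, by rw [← hkμ, hkn]⟩

/-- The function `S_p(n π_p x)` together with its normalized derivative. -/
lemma exists_normalized_solution {p : ℝ} (hp : 1 < p) {n : ℕ} (hn : 1 ≤ n) :
    ∃ u v : ℝ → ℝ, (∃ x ∈ Icc (0 : ℝ) 1, u x ≠ 0) ∧
      (∀ x, HasDerivAt u (n * pip p * v x) x) ∧
      (∀ x, HasDerivAt (fun t => signedPow p (v t))
        (-(p - 1) * (n * pip p) * signedPow p (u x)) x) ∧ u 0 = 0 ∧ u 1 = 0 := by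
  have hp0 : 0 < p := by linarith
  have hP := pip_pos hp
  have hn0 : (0 : ℝ) < n := by exact_mod_cast hn
  set G := (arcsinIso hp).symm
  have hGF : ∀ x, G (arcsinP p x) = x := fun x => (arcsinIso hp).symm_apply_apply x
  have hFG : ∀ x, arcsinP p (G x) = x := fun x => (arcsinIso hp).apply_symm_apply x
  have hGc : Continuous G := G.continuous
  have hG0 : G 0 = 0 := by simpa [arcsinP_zero] using hGF 0
  have hG1 : G (pip p / Real.pi * (Real.pi / 2)) = 1 := by
    rw [← hGF 1, arcsinP_one hp]
    congr 1
    field_simp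
  have hGm1 : G (pip p / Real.pi * (-(Real.pi / 2))) = -1 := by
    rw [← hGF (-1), arcsinP_neg, arcsinP_one hp]
    congr 1
    field_simp
  let ω : ℝ := n * Real.pi
  have hω : 0 < ω := mul_pos hn0 Real.pi_pos
  let s : ℝ → ℝ := fun x => Real.sin (ω * x)
  let c : ℝ → ℝ := fun x => Real.cos (ω * x)
  have hl : ∀ x : ℝ, HasDerivAt (fun t => ω * t) ω x := fun x => by
    simpa using (hasDerivAt_id x).const_mul ω
  have hs : ∀ x, HasDerivAt s (c x * ω) x := fun x => (hl x).sin
  have hc : ∀ x, HasDerivAt c (-s x * ω) x := fun x => (hl x).cos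
  have hsc : ∀ x, s x ^ 2 + c x ^ 2 = 1 := fun x => Real.sin_sq_add_cos_sq _
  let u : ℝ → ℝ := fun x => G (pip p / Real.pi * Real.arcsin (s x))
  let v : ℝ → ℝ := fun x => Real.sign (c x) * (1 - |u x| ^ p) ^ (1 / p)
  have hπP : 0 < pip p / Real.pi := div_pos hP Real.pi_pos
  have hu_lt : ∀ x, c x ≠ 0 → |u x| < 1 := by
    intro x hx
    have hs1 : s x ^ 2 < 1 := by nlinarith [hsc x, sq_pos_of_ne_zero hx]
    obtain ⟨h1, h2⟩ := abs_lt.1 ((sq_lt_one_iff_abs_lt_one _).1 hs1)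
    rw [abs_lt]
    constructor
    · rw [← hGm1]
      exact G.strictMono (mul_lt_mul_of_pos_left (Real.neg_pi_div_two_lt_arcsin.2 h1) hπP)
    · rw [← hG1]
      exact G.strictMono (mul_lt_mul_of_pos_left (Real.arcsin_lt_pi_div_two.2 h2) hπP)
  have hu_one : ∀ x, c x = 0 → |u x| = 1 := by
    intro x hx
    have hs1 : s x ^ 2 = 1 := by simpa [hx] using hsc x
    rcases sq_eq_sq_iff_eq_or_eq_neg.1 (hs1.trans (one_pow 2).symm) with h | h
    · simp only [u, h, Real.arcsin_one, hG1, abs_one]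
    · simp only [u, h, Real.arcsin_neg_one, hGm1, abs_neg, abs_one]
  have huc : Continuous u :=
    hGc.comp (continuous_const.mul (Real.continuous_arcsin.comp
      (continuous_iff_continuousAt.2 fun x => (hs x).continuousAt)))
  have hrc : Continuous fun x => 1 - |u x| ^ p :=
    continuous_const.sub (huc.abs.rpow_const fun _ => Or.inr hp0.le)
  have hvc : Continuous v := continuous_iff_continuousAt.2 fun x =>
    continuousAt_sign_mul (hc x).continuousAt
      (hrc.rpow_const fun _ => Or.inr (by positivity)).continuousAt fun h => by
        rw [hu_one x h, Real.one_rpow, sub_self, Real.zero_rpow (one_div_pos.2 hp0).ne']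
  have hureg : ∀ x, c x ≠ 0 → HasDerivAt u (n * pip p * v x) x := by
    intro x hx
    have hr := one_sub_abs_rpow_pos hp (hu_lt x hx)
    have hs1 : s x ^ 2 < 1 := by nlinarith [hsc x, sq_pos_of_ne_zero hx]
    obtain ⟨h1, h2⟩ := abs_lt.1 ((sq_lt_one_iff_abs_lt_one _).1 hs1)
    have hasin := ((Real.hasDerivAt_arcsin h1.ne' h2.ne).comp x (hs x)).const_mul (pip p / Real.pi)
    have hsqrt : √(1 - s x ^ 2) = |c x| := by
      rw [← Real.sqrt_sq_eq_abs]
      congr 1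
      linarith [hsc x]
    have hGd := HasDerivAt.of_local_left_inverse hGc.continuousAt
      (hasDerivAt_arcsinP hp (hu_lt x hx)) (Real.rpow_pos_of_pos hr _).ne'
      (Eventually.of_forall hFG)
    refine (hGd.comp x hasin).congr_deriv ?_
    rw [hsqrt, Real.rpow_neg hr.le, inv_inv]
    simp only [v, ω]
    rw [← div_abs_eq_sign hx]
    have := Real.pi_ne_zero
    field_simp
  have hvreg : ∀ x, c x ≠ 0 → HasDerivAt (fun t => signedPow p (v t))
      (-(p - 1) * (n * pip p) * signedPow p (u x)) x := by
    intro x hx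
    have hr := one_sub_abs_rpow_pos hp (hu_lt x hx)
    have hev : (fun t => signedPow p (v t)) =ᶠ[𝓝 x]
        fun t => Real.sign (c x) * (1 - |u t| ^ p) ^ ((p - 1) / p) := by
      filter_upwards [(hc x).continuousAt.eventually_ne hx,
        sign_eventually_eq (hc x).continuousAt hx] with t ht hst
      have hrt := one_sub_abs_rpow_pos hp (hu_lt t ht)
      simp only [signedPow, v]
      rw [abs_mul, abs_sign_of_ne_zero ht, one_mul, hst,
        abs_of_pos (Real.rpow_pos_of_pos hrt _), ← Real.rpow_mul hrt.le,
        mul_left_comm, ← Real.rpow_add hrt]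
      congr 2
      field_simp
      ring
    have hd := ((hasDerivAt_abs_rpow_comp hp (hureg x hx)).const_sub 1).rpow_const
      (p := (p - 1) / p) (Or.inl hr.ne')
    refine ((hd.const_mul (Real.sign (c x))).congr_of_eventuallyEq hev).congr_deriv ?_
    have he : (1 - |u x| ^ p) ^ ((p - 1) / p - 1) * (1 - |u x| ^ p) ^ (1 / p) = 1 := by
      rw [← Real.rpow_add hr]
      have : (p - 1) / p - 1 + 1 / p = 0 := by field_simp; ring
      rw [this, Real.rpow_zero]
    have hss := sign_mul_sign_of_ne_zero hx
    simp only [v]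
    generalize Real.sign (c x) = σ at *
    generalize (1 - |u x| ^ p) ^ ((p - 1) / p - 1) = A at *
    generalize (1 - |u x| ^ p) ^ (1 / p) = B at *
    field_simp
    linear_combination (-(p - 1) * signedPow p (u x)) * (A * B * hss + he)
  have hpunct : ∀ x, c x = 0 → ∀ᶠ t in 𝓝[≠] x, c t ≠ 0 := fun x hx => by
    refine (hc x).eventually_ne (c := 0) (mul_ne_zero (neg_ne_zero.2 fun h => ?_) hω.ne')
    simpa [hx, h] using hsc x
  refine ⟨u, v, ⟨1 / (2 * n), ⟨by positivity, ?_⟩, ?_⟩, fun x => ?_, fun x => ?_, ?_, ?_⟩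
  · rw [div_le_one (by positivity)]
    have : (1 : ℝ) ≤ n := by exact_mod_cast hn
    linarith
  · have : s (1 / (2 * n)) = 1 := by
      simp only [s, ω]
      rw [show n * Real.pi * (1 / (2 * n)) = Real.pi / 2 by field_simp, Real.sin_pi_div_two]
    simp only [u, this, Real.arcsin_one, hG1]
    exact one_ne_zero
  · by_cases hx : c x = 0
    · exact hasDerivAt_of_eventually_ne (g := fun t => n * pip p * v t)
        ((hpunct x hx).mono hureg) huc.continuousAt (by fun_prop)
    · exact hureg x hx
  · by_cases hx : c x = 0
    · have hφ := continuous_signedPow hp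
      exact hasDerivAt_of_eventually_ne
        (g := fun t => -(p - 1) * (n * pip p) * signedPow p (u t))
        ((hpunct x hx).mono hvreg) (by fun_prop) (by fun_prop)
    · exact hvreg x hx
  · simp [u, s, hG0]
  · have : s 1 = 0 := by simp [s, ω, Real.sin_nat_mul_pi]
    simp only [u, this, Real.arcsin_zero, mul_zero, hG0]

lemma isDirichletEigenvalue_iff {p μ : ℝ} (hp : 1 < p) :
    IsDirichletEigenvalue p (fun _ => 0) 0 1 μ ↔ ∃ n : ℕ, 1 ≤ n ∧ μ = (n * pip p) ^ p := by
  constructor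
  · rintro ⟨y, yd, hne, hy, hw, hy0, hy1⟩
    exact exists_nat_of_solution hp hne hy
      (fun x hx => (hw x hx).congr_deriv (by rw [sub_zero, signedPow])) hy0 hy1
  · rintro ⟨n, hn, rfl⟩
    obtain ⟨u, v, hne, hu, hv, hu0, hu1⟩ := exists_normalized_solution hp hn
    have hk : 0 < n * pip p := mul_pos (by exact_mod_cast hn) (pip_pos hp)
    refine ⟨u, fun x => n * pip p * v x, hne, fun x _ => hu x, fun x _ => ?_, hu0, hu1⟩
    change HasDerivAt (fun t => signedPow p (n * pip p * v t)) _ x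
    simp only [signedPow_const_mul hk]
    refine ((hv x).const_mul _).congr_deriv ?_
    have h : (n * pip p) ^ p = (n * pip p) ^ (p - 1) * (n * pip p) := by
      rw [← Real.rpow_add_one hk.ne', sub_add_cancel]
    rw [h, signedPow]
    ring

end GeneralizedSine

/-- for q ≡ 0 the Dirichlet eigenvalues are exactly (n π_p)^p, n ≥ 1,
and their ratios are n^p/m^p. -/
theorem eigenvalues_free_problem (p : ℝ) (hp : 1 < p) :
    (∀ μ : ℝ, IsDirichletEigenvalue p (fun _ => 0) 0 1 μ ↔
      ∃ n : ℕ, 1 ≤ n ∧ μ = ((n : ℝ) * pip p) ^ p) ∧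
    (∀ n m : ℕ, 1 ≤ n → 1 ≤ m →
      ((n : ℝ) * pip p) ^ p / ((m : ℝ) * pip p) ^ p = (n : ℝ) ^ p / (m : ℝ) ^ p) := by
  refine ⟨fun μ => GeneralizedSine.isDirichletEigenvalue_iff hp, fun n m hn hm => ?_⟩
  have hP := GeneralizedSine.pip_pos hp
  rw [Real.mul_rpow n.cast_nonneg hP.le, Real.mul_rpow m.cast_nonneg hP.le,
    mul_div_mul_right _ _ (Real.rpow_pos_of_pos hP p).ne']
end
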